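/- arXiv:2401.00244 — 7 statements merged into one kernel-verified Lean document; each statement's English description precedes it below -/
import Mathlib

section
/- Let r ≥ 2 be an integer and let a > b > 0 be coprime integers. Let a₀, a₁, …, a_n be the positive integers defined inductively by a₀ = a, a₁ = b, and a_{j+1} = a_{j−1} − q_j a_j for some positive integers q₁, …, q_{n−1}, terminating at a_n = 1. Let s₀, s₁, …, s_n be defined inductively by s₀ = 0, s₁ = 1, and s_{j+1} = s_j q_j + s_{j−1}. Then c(b, a; b/r, a/r) = Σ_{j=1}^{n} (−1)^j [ c(a_{j−1}/r) · c(a_j/r) − (a_{j−1}/a_j) · (δ(a_j, r)/r) · c₂(a_{j−1}/r) − (a_j/a_{j−1}) · (δ(a_{j−1}, r)/r) · c₂(a_j/r) ] + (−1)^{n−1} (s_n/a) · c₂(1/r) + E, where E = −1 if n is odd and E = 0 if n is even. -/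
open Real
open scoped Classical

/-- `c(z) = cot(πz)` if `z ∉ ℤ`, and `0` if `z ∈ ℤ`. -/
noncomputable def cFn (z : ℝ) : ℝ :=
  if ∃ m : ℤ, z = m then 0 else Real.cot (Real.pi * z)

/-- `c₂(z) = csc²(πz)` if `z ∉ ℤ`, and `1/3` if `z ∈ ℤ`. -/
noncomputable def c2Fn (z : ℝ) : ℝ :=
  if ∃ m : ℤ, z = m then 1 / 3 else 1 / (Real.sin (Real.pi * z)) ^ 2

/-- `δ(z, n) = n` if `z` is an integer divisible by `n`, and `0` otherwise. -/
noncomputable def deltaFn (z : ℝ) (n : ℤ) : ℝ :=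
  if ∃ m : ℤ, z = m ∧ n ∣ m then (n : ℝ) else 0

/-- The Dedekind–Dieter cotangent sum
`c(b,a;x,y) = (1/a) ∑_{k=0}^{a-1} c((b/a)(k+y) - x) c((k+y)/a)`. -/
noncomputable def dedekindDieter (b a : ℤ) (x y : ℝ) : ℝ :=
  (1 / (a : ℝ)) * ∑ k ∈ Finset.range a.toNat,
    cFn ((b : ℝ) / (a : ℝ) * ((k : ℝ) + y) - x) * cFn (((k : ℝ) + y) / (a : ℝ))

noncomputable def iotaFn (z : ℝ) : ℝ := if ∃ m : ℤ, z = m then 1 else 0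

lemma isInt_add_int (z : ℝ) (k : ℤ) : (∃ m : ℤ, z + k = m) ↔ ∃ m : ℤ, z = m := by
  constructor
  · rintro ⟨m, hm⟩
    exact ⟨m - k, by push_cast; linarith⟩
  · rintro ⟨m, hm⟩
    exact ⟨m + k, by push_cast; linarith⟩

lemma isInt_neg (z : ℝ) : (∃ m : ℤ, -z = m) ↔ ∃ m : ℤ, z = m := by
  constructor
  · rintro ⟨m, hm⟩
    exact ⟨-m, by push_cast; linarith⟩
  · rintro ⟨m, hm⟩
    exact ⟨-m, by push_cast; linarith⟩

lemma sin_ne {z : ℝ} (h : ¬ ∃ m : ℤ, z = m) : Real.sin (Real.pi * z) ≠ 0 := by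
  intro h0
  rw [Real.sin_eq_zero_iff] at h0
  obtain ⟨m, hm⟩ := h0
  apply h
  refine ⟨m, ?_⟩
  have := Real.pi_ne_zero
  have h2 : Real.pi * (z - m) = 0 := by linarith
  rcases mul_eq_zero.1 h2 with h3 | h3
  · exact absurd h3 this
  · linarith

lemma cot_per (z : ℝ) (k : ℤ) : Real.cot (Real.pi * (z + k)) = Real.cot (Real.pi * z) := by
  rw [← Real.tan_inv_eq_cot, ← Real.tan_inv_eq_cot]
  congr 1
  rw [mul_add, mul_comm Real.pi (k : ℝ), Real.tan_add_int_mul_pi]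

lemma cFn_add_int (z : ℝ) (k : ℤ) : cFn (z + k) = cFn z := by
  unfold cFn
  simp only [isInt_add_int, cot_per]

lemma iotaFn_add_int (z : ℝ) (k : ℤ) : iotaFn (z + k) = iotaFn z := by
  unfold iotaFn
  simp only [isInt_add_int]

lemma cFn_neg (z : ℝ) : cFn (-z) = - cFn z := by
  unfold cFn
  simp only [isInt_neg]
  split_ifs
  · simp
  · rw [mul_neg, Real.cot_eq_cos_div_sin, Real.cot_eq_cos_div_sin, Real.cos_neg, Real.sin_neg,
      div_neg]

lemma c2_eq {z : ℝ} (h : ¬ ∃ m : ℤ, z = m) : c2Fn z = 1 + cFn z ^ 2 := by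
  have hs := sin_ne h
  rw [c2Fn, cFn, if_neg h, if_neg h, Real.cot_eq_cos_div_sin]
  field_simp
  rw [Real.sin_sq_add_cos_sq]

lemma pair_id (u v : ℝ) (h : ¬ ∃ m : ℤ, u - v = m) :
    cFn u * cFn v = -1 + cFn (u - v) * (cFn v - cFn u) + iotaFn u * c2Fn v + iotaFn v * c2Fn u := by
  by_cases hu : ∃ m : ℤ, u = m
  · have hv : ¬ ∃ m : ℤ, v = m := by
      rintro ⟨m, rfl⟩
      obtain ⟨k, rfl⟩ := hu
      exact h ⟨k - m, by push_cast; ring⟩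
    have h1 : cFn u = 0 := by rw [cFn, if_pos hu]
    have h2 : iotaFn u = 1 := by rw [iotaFn, if_pos hu]
    have h3 : iotaFn v = 0 := by rw [iotaFn, if_neg hv]
    obtain ⟨k, rfl⟩ := hu
    have h4 : cFn (k - v) = - cFn v := by
      rw [← cFn_neg, ← cFn_add_int (-v) k]; congr 1; ring
    rw [h1, h2, h3, h4, c2_eq hv]; ring
  · have h2 : iotaFn u = 0 := by rw [iotaFn, if_neg hu]
    by_cases hv : ∃ m : ℤ, v = m
    · have h1 : cFn v = 0 := by rw [cFn, if_pos hv]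
      have h3 : iotaFn v = 1 := by rw [iotaFn, if_pos hv]
      obtain ⟨k, rfl⟩ := hv
      have h4 : cFn (u - k) = cFn u := by
        rw [← cFn_add_int (u - k) k]; congr 1; ring
      rw [h1, h2, h3, h4, c2_eq hu]; ring
    · have h3 : iotaFn v = 0 := by rw [iotaFn, if_neg hv]
      have su := sin_ne hu
      have sv := sin_ne hv
      have sw := sin_ne h
      rw [h2, h3, cFn, cFn, cFn, if_neg hu, if_neg hv, if_neg h]
      simp only [Real.cot_eq_cos_div_sin]
      have e : Real.pi * (u - v) = Real.pi * u - Real.pi * v := by ring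
      rw [e, Real.sin_sub] at sw
      rw [e, Real.sin_sub, Real.cos_sub]
      field_simp
      linear_combination 0

lemma root_sum (b : ℕ) (hb : 0 < b) (ζ w : ℂ) (hζ : IsPrimitiveRoot ζ b) (hw : w ^ b ≠ 1) :
    ∑ l ∈ Finset.range b, 1 / (1 - w * ζ ^ l) = b / (1 - w ^ b) := by
  have hw' : 1 - w ^ b ≠ 0 := fun h => hw (by linear_combination -h)
  have h1 : ∀ l : ℕ, 1 / (1 - w * ζ ^ l) =
      (∑ m ∈ Finset.range b, w ^ m * (ζ ^ m) ^ l) / (1 - w ^ b) := by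
    intro l
    have e : (w * ζ ^ l) ^ b = w ^ b := by
      rw [mul_pow, ← pow_mul, mul_comm l b, pow_mul, hζ.pow_eq_one, one_pow, mul_one]
    have hne : 1 - w * ζ ^ l ≠ 0 := by
      intro h
      have : w * ζ ^ l = 1 := by linear_combination -h
      rw [this, one_pow] at e
      exact hw e.symm
    have g := geom_sum_mul (w * ζ ^ l) b
    rw [e] at g
    have : ∀ m, w ^ m * (ζ ^ m) ^ l = (w * ζ ^ l) ^ m := by
      intro m
      rw [mul_pow, ← pow_mul, ← pow_mul, mul_comm l m]
    simp only [this]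
    rw [div_eq_div_iff hne hw']
    linear_combination g
  simp only [h1]
  rw [← Finset.sum_div, Finset.sum_comm]
  congr 1
  rw [Finset.sum_eq_single 0]
  · simp
  · intro m hm hm0
    rw [← Finset.mul_sum]
    have hz : ζ ^ m ≠ 1 := by
      intro h
      have := (hζ.pow_eq_one_iff_dvd m).1 h
      have h2 := Nat.le_of_dvd (Nat.pos_of_ne_zero hm0) this
      have := Finset.mem_range.1 hm
      omega
    have g := geom_sum_mul (ζ ^ m) b
    rw [← pow_mul, mul_comm m b, pow_mul, hζ.pow_eq_one, one_pow, sub_self] at g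
    rcases mul_eq_zero.1 g with g | g
    · rw [g, mul_zero]
    · exact absurd (sub_eq_zero.1 g) hz
  · intro h
    exact absurd (Finset.mem_range.2 hb) h

lemma cot_form (z : ℝ) (h : ¬ ∃ m : ℤ, z = m) :
    ((cFn z : ℝ) : ℂ) = -Complex.I * (2 * (1 / (1 - Complex.exp (2 * Real.pi * Complex.I * z))) - 1)
    ∧ Complex.exp (2 * Real.pi * Complex.I * z) ≠ 1 := by
  have hne : Complex.exp (2 * Real.pi * Complex.I * z) ≠ 1 := by
    intro h1
    rw [Complex.exp_eq_one_iff] at h1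
    obtain ⟨m, hm⟩ := h1
    apply h
    refine ⟨m, ?_⟩
    have h2 : (2 * Real.pi * Complex.I) * ((z : ℂ) - m) = 0 := by linear_combination hm
    rcases mul_eq_zero.1 h2 with h3 | h3
    · exact absurd h3 Complex.two_pi_I_ne_zero
    · exact_mod_cast sub_eq_zero.1 h3
  refine ⟨?_, hne⟩
  rw [cFn, if_neg h, Complex.ofReal_cot]
  push_cast
  rw [Complex.cot_pi_eq_exp_ratio]
  have : 1 - Complex.exp (2 * Real.pi * Complex.I * z) ≠ 0 := fun h => hne (by linear_combination -h)
  have hI := Complex.I_ne_zero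
  field_simp
  rw [Complex.I_sq]
  ring

lemma per_sum (f : ℝ → ℝ) (hf : ∀ z, f (z + 1) = f z) (b : ℕ) (hb : 0 < b) :
    Function.Periodic (fun x => ∑ l ∈ Finset.range b, f (x + (l : ℝ) / b)) (1 / b) := by
  intro x
  have hb' : (b : ℝ) ≠ 0 := by positivity
  have h1 := Finset.sum_range_succ (fun l : ℕ => f (x + (l : ℝ) / b)) b
  have h2 := Finset.sum_range_succ' (fun l : ℕ => f (x + (l : ℝ) / b)) b
  have h3 : f (x + (b : ℝ) / b) = f (x + ((0 : ℕ) : ℝ) / b) := by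
    rw [div_self hb', hf]; simp
  have h4 : ∀ l : ℕ, f (x + 1 / b + (l : ℝ) / b) = f (x + ((l + 1 : ℕ) : ℝ) / b) := by
    intro l; congr 1; push_cast; ring
  simp only [h4]
  linarith

lemma per_sum_zero (f : ℝ → ℝ) (hf : ∀ z, f (z + 1) = f z) (b : ℕ) (hb : 0 < b) (x : ℝ) (m : ℤ)
    (hx : (b : ℝ) * x = m) :
    ∑ l ∈ Finset.range b, f (x + (l : ℝ) / b) = ∑ l ∈ Finset.range b, f ((l : ℝ) / b) := by
  have h := (per_sum f hf b hb).int_mul m 0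
  have hb' : (b : ℝ) ≠ 0 := by positivity
  have e : (0 : ℝ) + m * (1 / b) = x := by rw [← hx]; field_simp; simp
  rw [e] at h
  simpa using h

lemma cFn_add_one (z : ℝ) : cFn (z + 1) = cFn z := by
  simpa using cFn_add_int z 1

lemma iotaFn_add_one (z : ℝ) : iotaFn (z + 1) = iotaFn z := by
  simpa using iotaFn_add_int z 1

lemma notInt_of {b : ℕ} (hb : 0 < b) {x : ℝ} (h : ¬ ∃ m : ℤ, (b : ℝ) * x = m) (l : ℕ) :
    ¬ ∃ m : ℤ, x + (l : ℝ) / b = m := by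
  rintro ⟨m, hm⟩
  apply h
  refine ⟨b * m - l, ?_⟩
  have hb' : (b : ℝ) ≠ 0 := by positivity
  push_cast
  rw [← hm]
  field_simp
  ring

lemma cFn_sum (b : ℕ) (hb : 0 < b) (x : ℝ) :
    ∑ l ∈ Finset.range b, cFn (x + (l : ℝ) / b) = b * cFn (b * x) := by
  have hb' : (b : ℝ) ≠ 0 := by positivity
  by_cases h : ∃ m : ℤ, (b : ℝ) * x = m
  · have h0 : cFn (b * x) = 0 := by rw [cFn, if_pos h]
    obtain ⟨m, hm⟩ := h
    rw [h0, mul_zero, per_sum_zero cFn cFn_add_one b hb x m hm]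
    have h1 := Finset.sum_range_reflect (fun l : ℕ => cFn ((l : ℝ) / b)) b
    have h2 : ∀ l ∈ Finset.range b, cFn (((b - 1 - l : ℕ) : ℝ) / b) = - cFn (1 / b + (l : ℝ) / b) := by
      intro l hl
      have hl := Finset.mem_range.1 hl
      rw [← cFn_neg, ← cFn_add_one (-_)]
      congr 1
      rw [Nat.cast_sub (by omega), Nat.cast_sub (by omega)]
      field_simp
      push_cast
      ring
    rw [Finset.sum_congr rfl h2, Finset.sum_neg_distrib,
      per_sum_zero cFn cFn_add_one b hb (1 / b) 1 (by field_simp; simp)] at h1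
    linarith
  · have hl := notInt_of hb h
    obtain ⟨e1, e2⟩ := cot_form _ h
    have hz := Complex.isPrimitiveRoot_exp b (by omega)
    have hwb : Complex.exp (2 * Real.pi * Complex.I * x) ^ b
        = Complex.exp (2 * Real.pi * Complex.I * ((b * x : ℝ) : ℂ)) := by
      rw [← Complex.exp_nat_mul]; congr 1; push_cast; ring
    have key := root_sum b hb _ (Complex.exp (2 * Real.pi * Complex.I * x)) hz (by rw [hwb]; exact e2)
    have hterm : ∀ l : ℕ, ((cFn (x + (l : ℝ) / b) : ℝ) : ℂ) = -Complex.I * (2 * (1 / (1 -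
        Complex.exp (2 * Real.pi * Complex.I * x) *
          Complex.exp (2 * Real.pi * Complex.I / b) ^ l)) - 1) := by
      intro l
      rw [(cot_form _ (hl l)).1, ← Complex.exp_nat_mul, ← Complex.exp_add]
      congr 6
      push_cast
      ring
    apply Complex.ofReal_injective
    rw [Complex.ofReal_sum, Complex.ofReal_mul, e1]
    simp only [hterm]
    rw [← Finset.mul_sum, Finset.sum_sub_distrib, ← Finset.mul_sum, key, hwb]
    simp only [Finset.sum_const, Finset.card_range, nsmul_eq_mul]
    push_cast
    ring

lemma iotaFn_sum (b : ℕ) (hb : 0 < b) (x : ℝ) :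
    ∑ l ∈ Finset.range b, iotaFn (x + (l : ℝ) / b) = iotaFn (b * x) := by
  have hb' : (b : ℝ) ≠ 0 := by positivity
  by_cases h : ∃ m : ℤ, (b : ℝ) * x = m
  · have h0 : iotaFn (b * x) = 1 := by rw [iotaFn, if_pos h]
    obtain ⟨m, hm⟩ := h
    rw [h0, per_sum_zero iotaFn iotaFn_add_one b hb x m hm, Finset.sum_eq_single 0]
    · rw [iotaFn, if_pos ⟨0, by simp⟩]
    · intro l hl hl0
      rw [iotaFn, if_neg]
      rintro ⟨m, hm⟩
      have e : (l : ℝ) = m * b := by rw [← hm]; field_simp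
      have e' : (l : ℤ) = m * b := by exact_mod_cast e
      have : (b : ℤ) ∣ l := ⟨m, by rw [e']; ring⟩
      have := Nat.le_of_dvd (Nat.pos_of_ne_zero hl0) (Int.natCast_dvd_natCast.1 this)
      have := Finset.mem_range.1 hl
      omega
    · intro h
      exact absurd (Finset.mem_range.2 hb) h
  · rw [iotaFn, if_neg h]
    apply Finset.sum_eq_zero
    intro l _
    rw [iotaFn, if_neg (notInt_of hb h l)]

lemma cFn_zero : cFn 0 = 0 := by rw [cFn, if_pos ⟨0, by simp⟩]

lemma cFn_int (m : ℤ) : cFn m = 0 := by rw [cFn, if_pos ⟨m, rfl⟩]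

lemma cFn_sum_sub (b : ℕ) (hb : 0 < b) (x : ℝ) :
    ∑ l ∈ Finset.range b, cFn (x - (l : ℝ) / b) = b * cFn (b * x) := by
  have h := cFn_sum b hb (-x)
  rw [mul_neg, cFn_neg] at h
  have h2 : ∀ l : ℕ, cFn (x - (l : ℝ) / b) = - cFn (-x + (l : ℝ) / b) := by
    intro l; rw [← cFn_neg]; congr 1; ring
  simp only [h2, Finset.sum_neg_distrib, h]
  ring

lemma frac_sub {b : ℕ} {k l : ℕ} (hk : k < b) (hl : l < b) (hne : k ≠ l) :
    ¬ ∃ m : ℤ, (k : ℝ) / b - (l : ℝ) / b = m := by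
  rintro ⟨m, hm⟩
  have hb' : (b : ℝ) ≠ 0 := by have : 0 < b := by omega
                               positivity
  have e : (k : ℝ) - l = m * b := by rw [← hm]; field_simp
  have e' : (k : ℤ) - l = b * m := by rw [mul_comm]; exact_mod_cast e
  have h := Int.eq_zero_of_abs_lt_dvd (m := b) (x := (k : ℤ) - l) ⟨m, e'⟩ (by rw [abs_lt]; omega)
  omega

lemma c2Fn_sum (b : ℕ) (hb : 0 < b) (x : ℝ) (h : ¬ ∃ m : ℤ, (b : ℝ) * x = m) :
    ∑ l ∈ Finset.range b, c2Fn (x + (l : ℝ) / b) = b ^ 2 * c2Fn (b * x) := by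
  have hl := notInt_of hb h
  have hio : ∀ l : ℕ, iotaFn (x + (l : ℝ) / b) = 0 := fun l => by rw [iotaFn, if_neg (hl l)]
  have hpt : ∀ k ∈ Finset.range b, ∀ l ∈ Finset.range b,
      cFn (x + (k : ℝ) / b) * cFn (x + (l : ℝ) / b) =
      -1 + cFn ((k : ℝ) / b - (l : ℝ) / b) * cFn (x + (l : ℝ) / b)
        - cFn ((k : ℝ) / b - (l : ℝ) / b) * cFn (x + (k : ℝ) / b)
        + (if k = l then c2Fn (x + (k : ℝ) / b) else 0) := by
    intro k hk l hl'
    by_cases hkl : k = l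
    · subst hkl
      rw [if_pos rfl, c2_eq (hl k), sub_self, cFn_zero]; ring
    · have e : x + (k : ℝ) / b - (x + (l : ℝ) / b) = (k : ℝ) / b - (l : ℝ) / b := by ring
      have := pair_id (x + (k : ℝ) / b) (x + (l : ℝ) / b) (by
        rw [e]; exact frac_sub (Finset.mem_range.1 hk) (Finset.mem_range.1 hl') hkl)
      rw [hio, hio, e] at this
      rw [if_neg hkl, this]; ring
  have hs : (∑ k ∈ Finset.range b, cFn (x + (k : ℝ) / b)) * (∑ l ∈ Finset.range b, cFn (x + (l : ℝ) / b))
    = -(b : ℝ) * b + ∑ k ∈ Finset.range b, c2Fn (x + (k : ℝ) / b) := by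
    rw [Finset.sum_mul_sum, Finset.sum_congr rfl (fun k hk => Finset.sum_congr rfl (hpt k hk))]
    simp only [Finset.sum_add_distrib, Finset.sum_sub_distrib]
    have z1 : ∑ k ∈ Finset.range b, ∑ l ∈ Finset.range b,
        cFn ((k : ℝ) / b - (l : ℝ) / b) * cFn (x + (k : ℝ) / b) = 0 := by
      apply Finset.sum_eq_zero
      intro k hk
      rw [← Finset.sum_mul, cFn_sum_sub b hb]
      have : (b : ℝ) * ((k : ℝ) / b) = (k : ℤ) := by field_simp; simp
      rw [this, cFn_int]; ring
    have z2 : ∑ k ∈ Finset.range b, ∑ l ∈ Finset.range b,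
        cFn ((k : ℝ) / b - (l : ℝ) / b) * cFn (x + (l : ℝ) / b) = 0 := by
      rw [Finset.sum_comm]
      apply Finset.sum_eq_zero
      intro l hl
      rw [← Finset.sum_mul]
      have e2 : ∀ k : ℕ, cFn ((k : ℝ) / b - (l : ℝ) / b) = cFn (-((l : ℝ) / b) + (k : ℝ) / b) := by
        intro k; congr 1; ring
      simp only [e2]
      rw [cFn_sum b hb]
      have : (b : ℝ) * (-((l : ℝ) / b)) = ((-l : ℤ) : ℝ) := by field_simp; simp
      rw [this, cFn_int]; ring
    rw [z1, z2]
    have z3 : ∑ k ∈ Finset.range b, ∑ l ∈ Finset.range b,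
        (if k = l then c2Fn (x + (k : ℝ) / b) else 0) = ∑ k ∈ Finset.range b, c2Fn (x + (k : ℝ) / b) := by
      apply Finset.sum_congr rfl
      intro k hk
      rw [Finset.sum_ite_eq, if_pos hk]
    rw [z3]
    simp
  rw [cFn_sum b hb] at hs
  rw [c2_eq h]
  linarith

lemma iota_c2_sum (a b : ℕ) (hb : 0 < b) (x : ℝ)
    (h : ¬ ((∃ m : ℤ, (a : ℝ) * x = m) ∧ ∃ m : ℤ, (b : ℝ) * x = m)) :
    iotaFn (a * x) * ∑ l ∈ Finset.range b, c2Fn (x + (l : ℝ) / b)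
      = iotaFn (a * x) * (b ^ 2 * c2Fn (b * x)) := by
  by_cases ha : ∃ m : ℤ, (a : ℝ) * x = m
  · rw [c2Fn_sum b hb x (fun hb' => h ⟨ha, hb'⟩)]
  · rw [iotaFn, if_neg ha]; simp

/-- The reduced sum. -/
noncomputable def SFn (b : ℤ) (a : ℕ) (x : ℝ) : ℝ :=
  (1 / (a : ℝ)) * ∑ k ∈ Finset.range a, cFn ((b : ℝ) * ((k : ℝ) / a)) * cFn (x + (k : ℝ) / a)

lemma recip (a b : ℕ) (ha : 0 < a) (hb : 0 < b) (hc : Nat.Coprime a b) (x : ℝ)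
    (hx : ¬ ∃ m : ℤ, x = m) :
    SFn b a x + SFn a b x = -1 + c2Fn x / (a * b) - (cFn (a * x) * cFn (b * x)
      - (a / b : ℝ) * iotaFn (b * x) * c2Fn (a * x)
      - (b / a : ℝ) * iotaFn (a * x) * c2Fn (b * x)) := by
  have ha' : (a : ℝ) ≠ 0 := by positivity
  have hb' : (b : ℝ) ≠ 0 := by positivity
  have hnot : ¬ ((∃ m : ℤ, (a : ℝ) * x = m) ∧ ∃ m : ℤ, (b : ℝ) * x = m) := by
    rintro ⟨⟨m, hm⟩, ⟨p, hp⟩⟩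
    apply hx
    have hg := Nat.gcd_eq_gcd_ab a b
    rw [hc.gcd_eq_one] at hg
    have hg' : (1 : ℝ) = a * (Nat.gcdA a b : ℤ) + b * (Nat.gcdB a b : ℤ) := by exact_mod_cast hg
    refine ⟨m * Nat.gcdA a b + p * Nat.gcdB a b, ?_⟩
    push_cast
    rw [← hm, ← hp]
    linear_combination x * hg'
  have hpt : ∀ k ∈ Finset.range a, ∀ l ∈ Finset.range b,
      cFn (x + (k : ℝ) / a) * cFn (x + (l : ℝ) / b) =
      -1 + cFn ((k : ℝ) / a - (l : ℝ) / b) * cFn (x + (l : ℝ) / b)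
        - cFn ((k : ℝ) / a - (l : ℝ) / b) * cFn (x + (k : ℝ) / a)
        + iotaFn (x + (k : ℝ) / a) * c2Fn (x + (l : ℝ) / b)
        + iotaFn (x + (l : ℝ) / b) * c2Fn (x + (k : ℝ) / a)
        + (if k = 0 then (if l = 0 then c2Fn x else 0) else 0) := by
    intro k hk l hl
    have hk := Finset.mem_range.1 hk
    have hl := Finset.mem_range.1 hl
    by_cases hkl : k = 0 ∧ l = 0
    · obtain ⟨rfl, rfl⟩ := hkl
      simp only [Nat.cast_zero, zero_div, add_zero, sub_zero, if_true, cFn_zero]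
      rw [c2_eq hx, iotaFn, if_neg hx]; ring
    · have e : x + (k : ℝ) / a - (x + (l : ℝ) / b) = (k : ℝ) / a - (l : ℝ) / b := by ring
      have := pair_id (x + (k : ℝ) / a) (x + (l : ℝ) / b) (by
        rw [e]
        rintro ⟨m, hm⟩
        apply hkl
        have e1 : (k : ℝ) * b - l * a = m * a * b := by rw [← hm]; field_simp
        have e2 : (k : ℤ) * b - l * a = m * a * b := by exact_mod_cast e1
        have d1 : (a : ℤ) ∣ (k : ℤ) * b := ⟨l + m * b, by linear_combination e2⟩
        have d2 : (b : ℤ) ∣ (l : ℤ) * a := ⟨k - m * a, by linear_combination -e2⟩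
        have d1' : a ∣ k * b := by exact_mod_cast d1
        have d2' : b ∣ l * a := by exact_mod_cast d2
        exact ⟨Nat.eq_zero_of_dvd_of_lt (hc.dvd_of_dvd_mul_right d1') hk,
          Nat.eq_zero_of_dvd_of_lt (hc.symm.dvd_of_dvd_mul_right d2') hl⟩)
      rw [e] at this
      have e3 : (if k = 0 then (if l = 0 then c2Fn x else 0) else 0) = 0 := by
        split_ifs <;> tauto
      rw [e3, this]; ring
  have hs : (∑ k ∈ Finset.range a, cFn (x + (k : ℝ) / a)) * (∑ l ∈ Finset.range b, cFn (x + (l : ℝ) / b))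
    = -(a : ℝ) * b - a * b * SFn a b x - a * b * SFn b a x
      + iotaFn (a * x) * (b ^ 2 * c2Fn (b * x)) + iotaFn (b * x) * (a ^ 2 * c2Fn (a * x)) + c2Fn x := by
    rw [Finset.sum_mul_sum, Finset.sum_congr rfl (fun k hk => Finset.sum_congr rfl (hpt k hk))]
    simp only [Finset.sum_add_distrib, Finset.sum_sub_distrib]
    have z1 : ∑ k ∈ Finset.range a, ∑ l ∈ Finset.range b,
        cFn ((k : ℝ) / a - (l : ℝ) / b) * cFn (x + (k : ℝ) / a) = a * b * SFn b a x := by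
      have : (a * b : ℝ) * SFn b a x = b * ∑ k ∈ Finset.range a,
          cFn ((b : ℝ) * ((k : ℝ) / a)) * cFn (x + (k : ℝ) / a) := by
        rw [SFn]; field_simp; simp
      rw [this, Finset.mul_sum]
      apply Finset.sum_congr rfl
      intro k hk
      rw [← Finset.sum_mul, cFn_sum_sub b hb]; ring
    have z2 : ∑ k ∈ Finset.range a, ∑ l ∈ Finset.range b,
        cFn ((k : ℝ) / a - (l : ℝ) / b) * cFn (x + (l : ℝ) / b) = - (a * b * SFn a b x) := by
      have : (a * b : ℝ) * SFn a b x = a * ∑ k ∈ Finset.range b,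
          cFn ((a : ℝ) * ((k : ℝ) / b)) * cFn (x + (k : ℝ) / b) := by
        rw [SFn]; field_simp; simp
      rw [this, Finset.mul_sum, Finset.sum_comm, ← Finset.sum_neg_distrib]
      apply Finset.sum_congr rfl
      intro l hl
      rw [← Finset.sum_mul]
      have e2 : ∀ k : ℕ, cFn ((k : ℝ) / a - (l : ℝ) / b) = cFn (-((l : ℝ) / b) + (k : ℝ) / a) := by
        intro k; congr 1; ring
      simp only [e2]
      rw [cFn_sum a ha, mul_neg, cFn_neg]; ring
    rw [z1, z2]
    have z3 : ∑ k ∈ Finset.range a, ∑ l ∈ Finset.range b,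
        (if k = 0 then (if l = 0 then c2Fn x else 0) else 0) = c2Fn x := by
      rw [Finset.sum_eq_single 0, Finset.sum_eq_single 0]
      · simp
      · intro l _ h; simp [h]
      · intro h; exact absurd (Finset.mem_range.2 hb) h
      · intro k _ h; simp [h]
      · intro h; exact absurd (Finset.mem_range.2 ha) h
    have z4 : ∑ k ∈ Finset.range a, ∑ l ∈ Finset.range b,
        iotaFn (x + (k : ℝ) / a) * c2Fn (x + (l : ℝ) / b) = iotaFn (a * x) * (b ^ 2 * c2Fn (b * x)) := by
      rw [← Finset.sum_mul_sum, iotaFn_sum a ha, iota_c2_sum a b hb x hnot]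
    have z5 : ∑ k ∈ Finset.range a, ∑ l ∈ Finset.range b,
        iotaFn (x + (l : ℝ) / b) * c2Fn (x + (k : ℝ) / a) = iotaFn (b * x) * (a ^ 2 * c2Fn (a * x)) := by
      rw [Finset.sum_comm, ← Finset.sum_mul_sum, iotaFn_sum b hb,
        iota_c2_sum b a ha x (fun h => hnot ⟨h.2, h.1⟩)]
    rw [z3, z4, z5]
    simp
    ring
  rw [cFn_sum a ha, cFn_sum b hb] at hs
  field_simp
  linear_combination hs

lemma SFn_mod (b q : ℤ) (a : ℕ) (ha : 0 < a) (x : ℝ) : SFn (b + q * a) a x = SFn b a x := by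
  have ha' : (a : ℝ) ≠ 0 := by positivity
  unfold SFn
  congr 1
  apply Finset.sum_congr rfl
  intro k _
  congr 1
  rw [← cFn_add_int ((b : ℝ) * ((k : ℝ) / a)) (q * k)]
  congr 1
  push_cast
  field_simp

lemma SFn_one (b : ℤ) (x : ℝ) : SFn b 1 x = 0 := by
  simp [SFn, cFn_zero]

lemma DD_eq (b : ℤ) (a : ℕ) (ha : 0 < a) (r : ℤ) (hr : 2 ≤ r) :
    dedekindDieter b a ((b : ℝ) / r) (((a : ℤ) : ℝ) / r) = SFn b a (1 / r) := by
  have ha' : (a : ℝ) ≠ 0 := by positivity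
  have hr' : (r : ℝ) ≠ 0 := by
    have : r ≠ 0 := by omega
    exact_mod_cast this
  unfold dedekindDieter SFn
  simp only [Int.toNat_natCast, Int.cast_natCast]
  congr 1
  apply Finset.sum_congr rfl
  intro k _
  congr 2
  · field_simp; ring
  · field_simp; ring

lemma delta_eq (a r : ℤ) (hr : 2 ≤ r) : deltaFn (a : ℝ) r / r = iotaFn ((a : ℝ) / r) := by
  have hr' : (r : ℝ) ≠ 0 := by
    have : r ≠ 0 := by omega
    exact_mod_cast this
  unfold deltaFn iotaFn
  have : (∃ m : ℤ, (a : ℝ) = m ∧ r ∣ m) ↔ ∃ m : ℤ, (a : ℝ) / r = m := by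
    constructor
    · rintro ⟨m, h1, c, h2⟩
      refine ⟨c, ?_⟩
      rw [h1, h2]; push_cast; field_simp
    · rintro ⟨m, h⟩
      refine ⟨a, rfl, m, ?_⟩
      have : (a : ℝ) = r * m := by rw [← h]; field_simp
      exact_mod_cast this
  simp only [this]
  split_ifs
  · exact div_self hr'
  · simp

lemma recip_int (a b r : ℤ) (ha : 0 < a) (hb : 0 < b) (hc : IsCoprime a b) (hr : 2 ≤ r) :
    SFn b a.toNat (1 / r) = -1 + c2Fn (1 / r) / (a * b) - (cFn (a / r) * cFn (b / r)
      - (a / b : ℝ) * (deltaFn b r / r) * c2Fn (a / r)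
      - (b / a : ℝ) * (deltaFn a r / r) * c2Fn (b / r)) - SFn a b.toNat (1 / r) := by
  lift a to ℕ using ha.le
  lift b to ℕ using hb.le
  have hx : ¬ ∃ m : ℤ, (1 / (r : ℝ)) = m := by
    rintro ⟨m, hm⟩
    have hr' : (r : ℝ) ≠ 0 := by
      have : r ≠ 0 := by omega
      exact_mod_cast this
    have : (1 : ℝ) = m * r := by rw [← hm]; field_simp
    have h1 : (1 : ℤ) = m * r := by exact_mod_cast this
    have h2 : r ∣ 1 := ⟨m, by rw [h1]; ring⟩
    have := Int.le_of_dvd one_pos h2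
    omega
  have h := recip a b (by exact_mod_cast ha) (by exact_mod_cast hb)
    (Nat.isCoprime_iff_coprime.1 hc) (1 / r) hx
  rw [delta_eq _ _ hr, delta_eq _ _ hr]
  simp only [Int.toNat_natCast, Int.cast_natCast]
  simp only [mul_one_div] at h
  linear_combination h

/-- Reciprocity / Euclidean-algorithm evaluation of the Dedekind–Dieter sum
`c(b, a; b/r, a/r)` (special case of Dieter's reciprocity theorem). -/
theorem stmt_2 (r : ℤ) (hr : 2 ≤ r) (a b : ℤ) (hab : b < a) (hb : 0 < b)
    (hcop : Int.gcd a b = 1) (n : ℕ) (hn : 1 ≤ n)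
    (aSeq q s : ℕ → ℤ)
    (ha0 : aSeq 0 = a) (ha1 : aSeq 1 = b)
    (hapos : ∀ j ≤ n, 0 < aSeq j)
    (hqpos : ∀ j, 1 ≤ j → j ≤ n - 1 → 0 < q j)
    (harec : ∀ j, 1 ≤ j → j ≤ n - 1 → aSeq (j + 1) = aSeq (j - 1) - q j * aSeq j)
    (han : aSeq n = 1)
    (hs0 : s 0 = 0) (hs1 : s 1 = 1)
    (hsrec : ∀ j, 1 ≤ j → j ≤ n - 1 → s (j + 1) = s j * q j + s (j - 1)) :
    dedekindDieter b a ((b : ℝ) / (r : ℝ)) ((a : ℝ) / (r : ℝ)) =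
      (∑ j ∈ Finset.Icc 1 n, (-1 : ℝ) ^ j *
        (cFn ((aSeq (j - 1) : ℝ) / (r : ℝ)) * cFn ((aSeq j : ℝ) / (r : ℝ))
          - ((aSeq (j - 1) : ℝ) / (aSeq j : ℝ)) * (deltaFn ((aSeq j : ℝ)) r / (r : ℝ)) *
              c2Fn ((aSeq (j - 1) : ℝ) / (r : ℝ))
          - ((aSeq j : ℝ) / (aSeq (j - 1) : ℝ)) * (deltaFn ((aSeq (j - 1) : ℝ)) r / (r : ℝ)) *
              c2Fn ((aSeq j : ℝ) / (r : ℝ))))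
      + (-1 : ℝ) ^ (n - 1) * ((s n : ℝ) / (a : ℝ)) * c2Fn (1 / (r : ℝ))
      + (if Odd n then (-1 : ℝ) else 0) := by
  have hcop' : IsCoprime (aSeq 0) (aSeq 1) := by
    rw [ha0, ha1]; exact Int.isCoprime_iff_gcd_eq_one.2 hcop
  have hseq : ∀ m, m + 1 ≤ n → IsCoprime (aSeq m) (aSeq (m + 1)) ∧
      s (m + 1) * aSeq m + s m * aSeq (m + 1) = a := by
    intro m
    induction m with
    | zero => intro _; exact ⟨hcop', by rw [hs0, hs1, ha0]; ring⟩
    | succ m ih =>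
      intro hm
      obtain ⟨h1, h2⟩ := ih (by omega)
      have e := harec (m + 1) (by omega) (by omega)
      have e' := hsrec (m + 1) (by omega) (by omega)
      simp only [Nat.add_sub_cancel] at e e'
      constructor
      · rw [e]
        have : aSeq m - q (m + 1) * aSeq (m + 1) = aSeq m + aSeq (m + 1) * (- q (m + 1)) := by ring
        rw [this]
        exact (h1.add_mul_left_left _).symm
      · rw [e, e']; linear_combination h2
  have hapos' : 0 < a := by omega
  have key : ∀ m, 1 ≤ m → m ≤ n → dedekindDieter b a ((b : ℝ) / (r : ℝ)) ((a : ℝ) / (r : ℝ)) =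
      (∑ j ∈ Finset.Icc 1 m, (-1 : ℝ) ^ j *
        (cFn ((aSeq (j - 1) : ℝ) / (r : ℝ)) * cFn ((aSeq j : ℝ) / (r : ℝ))
          - ((aSeq (j - 1) : ℝ) / (aSeq j : ℝ)) * (deltaFn ((aSeq j : ℝ)) r / (r : ℝ)) *
              c2Fn ((aSeq (j - 1) : ℝ) / (r : ℝ))
          - ((aSeq j : ℝ) / (aSeq (j - 1) : ℝ)) * (deltaFn ((aSeq (j - 1) : ℝ)) r / (r : ℝ)) *
              c2Fn ((aSeq j : ℝ) / (r : ℝ))))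
      + (-1 : ℝ) ^ (m - 1) * ((s m : ℝ) / (a * aSeq m : ℝ)) * c2Fn (1 / (r : ℝ))
      + (if Odd m then (-1 : ℝ) else 0)
      + (-1 : ℝ) ^ m * SFn (aSeq (m - 1)) (aSeq m).toNat (1 / r) := by
    intro m hm1
    induction m, hm1 using Nat.le_induction with
    | base =>
      intro _
      have h1 := recip_int a b r hapos' hb (by rw [← ha0, ← ha1]; exact hcop') hr
      have h2 := DD_eq b a.toNat (by omega) r hr
      rw [Int.toNat_of_nonneg hapos'.le] at h2
      rw [h2, h1]
      simp [ha0, ha1, hs1]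
      ring
    | succ m hm ih =>
      intro hmn
      obtain ⟨h1, h2⟩ := hseq m hmn
      have p0 := hapos m (by omega)
      have p1 := hapos (m + 1) hmn
      have e := harec m hm (by omega)
      have hmod : SFn (aSeq (m - 1)) (aSeq m).toNat (1 / r)
          = SFn (aSeq (m + 1)) (aSeq m).toNat (1 / r) := by
        rw [← SFn_mod (aSeq (m + 1)) (q m) (aSeq m).toNat (by omega)]
        congr 1
        rw [Int.toNat_of_nonneg p0.le, e]; ring
      rw [ih (by omega), hmod, recip_int _ _ r p0 p1 h1 hr, Finset.sum_Icc_succ_top (by omega)]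
      simp only [Nat.add_sub_cancel]
      have h2' : (s (m + 1) : ℝ) * aSeq m + s m * aSeq (m + 1) = a := by exact_mod_cast h2
      have n0 : (aSeq m : ℝ) ≠ 0 := by exact_mod_cast p0.ne'
      have n1 : (aSeq (m + 1) : ℝ) ≠ 0 := by exact_mod_cast p1.ne'
      have na : (a : ℝ) ≠ 0 := by exact_mod_cast hapos'.ne'
      have hpm : (-1 : ℝ) ^ m = -(-1 : ℝ) ^ (m - 1) := by
        obtain ⟨t, rfl⟩ : ∃ t, m = t + 1 := ⟨m - 1, by omega⟩
        simp [pow_succ]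
      have hC : 1 / ((aSeq m : ℝ) * aSeq (m + 1)) =
          (s (m + 1) : ℝ) / (a * aSeq (m + 1)) + s m / (a * aSeq m) := by
        field_simp
        linear_combination -h2'
      have hE : (if Odd m then (-1 : ℝ) else 0) - (-1 : ℝ) ^ m
          = (if Odd (m + 1) then (-1 : ℝ) else 0) := by
        rcases Nat.even_or_odd m with h | h
        · have h' : Odd (m + 1) := h.add_one
          rw [if_pos h', if_neg (Nat.not_odd_iff_even.2 h), h.neg_one_pow]; ring
        · have h' : ¬ Odd (m + 1) := Nat.not_odd_iff_even.2 h.add_one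
          rw [if_neg h', if_pos h, h.neg_one_pow]; ring
      rw [← hE, pow_succ, div_eq_mul_one_div (c2Fn (1 / (r : ℝ))) ((aSeq m : ℝ) * aSeq (m + 1)), hC, hpm]
      ring
  have hfin := key n hn le_rfl
  rw [han] at hfin
  rw [hfin]
  have : SFn (aSeq (n - 1)) (1 : ℤ).toNat (1 / r) = 0 := SFn_one _ _
  rw [this]
  simp
end

section
/- Let p ≥ 5 be a prime. Then c(1, 2; 1/p, 2/p) = −cot(π/p)·cot(2π/p) + (1/2)·csc²(π/p) − 1 and c(2, 3; 2/p, 3/p) = cot(π/p)·cot(2π/p) − cot(2π/p)·cot(3π/p) − (1/3)·csc²(π/p). -/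
open Real
open scoped Classical

theorem cFn_eq (z : ℝ) : cFn z = Real.cos (π * z) / Real.sin (π * z) := by
  unfold cFn
  split_ifs with h
  · obtain ⟨m, rfl⟩ := h
    rw [mul_comm, Real.sin_int_mul_pi, div_zero]
  · rw [Real.cot_eq_cos_div_sin]

/-- Evaluation of the Dedekind–Dieter sums `c(1,2;1/p,2/p)` and `c(2,3;2/p,3/p)`
for a prime `p ≥ 5`. -/
theorem stmt_3 (p : ℕ) (hp : p.Prime) (hp5 : 5 ≤ p) :
    dedekindDieter 1 2 (1 / (p : ℝ)) (2 / (p : ℝ)) =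
      -Real.cot (π / p) * Real.cot (2 * π / p)
        + (1 / 2) * (1 / Real.sin (π / p) ^ 2) - 1 ∧
    dedekindDieter 2 3 (2 / (p : ℝ)) (3 / (p : ℝ)) =
      Real.cot (π / p) * Real.cot (2 * π / p)
        - Real.cot (2 * π / p) * Real.cot (3 * π / p)
        - (1 / 3) * (1 / Real.sin (π / p) ^ 2) := by
  have hp' : (5 : ℝ) ≤ p := by exact_mod_cast hp5
  have hp0 : (p : ℝ) ≠ 0 := by positivity
  obtain ⟨t, ht⟩ : ∃ t, t = π / (p : ℝ) := ⟨_, rfl⟩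
  have hpi := Real.pi_pos
  have ht0 : 0 < t := by rw [ht]; positivity
  have ht5 : t ≤ π / 5 := by rw [ht]; gcongr
  have hs : 0 < Real.sin t := Real.sin_pos_of_pos_of_lt_pi ht0 (by linarith)
  have hc : 0 < Real.cos t := Real.cos_pos_of_mem_Ioo ⟨by linarith, by linarith⟩
  have h3 : 0 < Real.sin (3 * t) := Real.sin_pos_of_pos_of_lt_pi (by linarith) (by linarith)
  have hcs := Real.sin_sq_add_cos_sq t
  have e2 : 2 * π / (p : ℝ) = 2 * t := by rw [ht]; ring
  have e3 : 3 * π / (p : ℝ) = 3 * t := by rw [ht]; ring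
  have hs3 := Real.sin_three_mul t
  have hD : 0 < 3 - 4 * Real.sin t ^ 2 := by
    have : 0 < Real.sin t * (3 - 4 * Real.sin t ^ 2) := by
      rw [hs3] at h3; linarith
    exact pos_of_mul_pos_right this hs.le
  rw [e2, e3, ← ht]
  simp only [Real.cot_eq_cos_div_sin]
  constructor
  · have a1 : (1 : ℝ) / 2 * (0 + 2 / p) - 1 / p = 0 := by ring
    have a2 : π * ((1 : ℝ) / 2 * (1 + 2 / p) - 1 / p) = π / 2 := by ring
    have L : dedekindDieter 1 2 (1 / (p : ℝ)) (2 / (p : ℝ)) = 0 := by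
      simp only [dedekindDieter, cFn_eq]
      rw [show (2 : ℤ).toNat = 2 from rfl, Finset.sum_range_succ, Finset.sum_range_one]
      push_cast
      rw [a1, a2]
      simp
    rw [L, Real.sin_two_mul, Real.cos_two_mul]
    field_simp
    nlinarith [hcs]
  · have a1 : (2 : ℝ) / 3 * (0 + 3 / p) - 2 / p = 0 := by ring
    have a2 : π * ((2 : ℝ) / 3 * (1 + 3 / p) - 2 / p) = π - π / 3 := by ring
    have a3 : π * ((2 : ℝ) / 3 * (2 + 3 / p) - 2 / p) = π / 3 + π := by ring
    have b2 : π * (((1 : ℝ) + 3 / p) / 3) = t + π / 3 := by rw [ht]; ring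
    have b3 : π * (((2 : ℝ) + 3 / p) / 3) = π - (π / 3 - t) := by rw [ht]; ring
    have p1 : 0 < Real.sin (t + π / 3) := Real.sin_pos_of_pos_of_lt_pi (by linarith) (by linarith)
    have p2 : 0 < Real.sin (π / 3 - t) := Real.sin_pos_of_pos_of_lt_pi (by linarith) (by linarith)
    have q3 : (√3 : ℝ) ^ 2 = 3 := Real.sq_sqrt (by norm_num)
    have r3 : (0 : ℝ) < √3 := by positivity
    have hprod : Real.sin (t + π / 3) * Real.sin (π / 3 - t) = (3 - 4 * Real.sin t ^ 2) / 4 := by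
      rw [Real.sin_add, Real.sin_sub, Real.sin_pi_div_three, Real.cos_pi_div_three]
      linear_combination (Real.cos t ^ 2 / 4) * q3 + 3 / 4 * hcs
    have hnum : Real.cos (t + π / 3) * Real.sin (π / 3 - t)
        + Real.cos (π / 3 - t) * Real.sin (t + π / 3) = √3 / 2 := by
      have := Real.sin_add (t + π / 3) (π / 3 - t)
      rw [show t + π / 3 + (π / 3 - t) = π - π / 3 by ring, Real.sin_pi_sub,
        Real.sin_pi_div_three] at this
      linarith
    have L : dedekindDieter 2 3 (2 / (p : ℝ)) (3 / (p : ℝ))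
        = - 2 / (3 * (3 - 4 * Real.sin t ^ 2)) := by
      simp only [dedekindDieter, cFn_eq]
      rw [show (3 : ℤ).toNat = 3 from rfl, Finset.sum_range_succ, Finset.sum_range_succ,
        Finset.sum_range_one]
      push_cast
      rw [a1, a2, a3, b2, b3]
      simp only [Real.cos_pi_sub, Real.sin_pi_sub, Real.cos_add_pi, Real.sin_add_pi,
        Real.sin_pi_div_three, Real.cos_pi_div_three, mul_zero, Real.sin_zero, div_zero, zero_mul,
        zero_add]
      have key : Real.cos (t + π / 3) / Real.sin (t + π / 3)
          + Real.cos (π / 3 - t) / Real.sin (π / 3 - t)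
          = (√3 / 2) / ((3 - 4 * Real.sin t ^ 2) / 4) := by
        rw [← hprod, ← hnum, div_add_div _ _ p1.ne' p2.ne',
          mul_comm (Real.cos (π / 3 - t))]
      have : ∀ A B : ℝ, 1 / 3 * (-(1 / 2) / (√3 / 2) * A + -(1 / 2) / -(√3 / 2) * (-B))
          = - (1 / (3 * √3)) * (A + B) := by
        intro A B
        field_simp
        ring
      rw [neg_div (Real.sin (π / 3 - t)), this, key]
      field_simp
      try norm_num
    have hsD : Real.sin (3 * t) = Real.sin t * (3 - 4 * Real.sin t ^ 2) := by rw [hs3]; ring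
    have hcot : Real.cos t / Real.sin t - Real.cos (3 * t) / Real.sin (3 * t)
        = Real.sin (2 * t) / (Real.sin t * Real.sin (3 * t)) := by
      have := Real.sin_sub (3 * t) t
      rw [show 3 * t - t = 2 * t by ring] at this
      rw [this]
      field_simp
    have h2 : Real.sin (2 * t) ≠ 0 := by rw [Real.sin_two_mul]; positivity
    have : Real.cos t / Real.sin t * (Real.cos (2 * t) / Real.sin (2 * t))
        - Real.cos (2 * t) / Real.sin (2 * t) * (Real.cos (3 * t) / Real.sin (3 * t))
        = (1 - 2 * Real.sin t ^ 2) / (Real.sin t * Real.sin (3 * t)) := by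
      have hc2 : Real.cos (2 * t) = 1 - 2 * Real.sin t ^ 2 := by
        rw [Real.cos_two_mul]; linarith
      rw [← hc2]
      calc _ = Real.cos (2 * t) / Real.sin (2 * t)
            * (Real.cos t / Real.sin t - Real.cos (3 * t) / Real.sin (3 * t)) := by ring
        _ = _ := by rw [hcot]; field_simp
    rw [L, this, hsD]
    have hD' := hD.ne'
    field_simp
    ring
end

section
/- Let a > b > 0 be coprime integers. Let a₀, a₁, …, a_n be the positive integers defined inductively by a₀ = a, a₁ = b, and a_j = a_{j−2} − q_{j−1} a_{j−1} for some positive integers q₁, …, q_{n−1}, terminating at a_n = 1, and let s₀, …, s_{n−1} be defined by s₀ = 0, s₁ = 1, and s_j = q_{j−1}s_{j−1} + s_{j−2} for 2 ≤ j ≤ n−1. Then s(b, a) = (−1)^{n−1}·(a_{n−1}² + 2)/(12 a_{n−1}) + a₁/(12 a₀) + (−1)^n · a_{n−2}/(12 a_{n−1}) + (−1)^n · s_{n−1}/(12 a₀ a_{n−1}) + Σ_{j=1}^{n−2} (−1)^{j−1} q_j/12 + E, where E = 0 if n is even and E = −1/4 if n is odd. -/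
open Real
open scoped Classical

/-- The generalized sawtooth function `((x))`. -/
noncomputable def saw (x : ℝ) : ℝ :=
  if ∃ m : ℤ, x = m then 0 else Int.fract x - 1 / 2

/-- The Dedekind–Rademacher sum
`s(b,a;x,y) = ∑_{k=0}^{|a|−1} ((x + (b/a)(k+y))) (((k+y)/a))`. -/
noncomputable def dedekindRademacher (b a : ℤ) (x y : ℝ) : ℝ :=
  ∑ k ∈ Finset.range a.natAbs,
    saw (x + (b : ℝ) / (a : ℝ) * ((k : ℝ) + y)) * saw (((k : ℝ) + y) / (a : ℝ))

/-- The ordinary Dedekind sum `s(b, a) = s(b, a; 0, 0)`. -/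
noncomputable def dedekindSum (b a : ℤ) : ℝ := dedekindRademacher b a 0 0


lemma saw_add_int (x : ℝ) (m : ℤ) : saw (x + m) = saw x := by
  unfold saw
  have h : (∃ k : ℤ, x + m = k) ↔ (∃ k : ℤ, x = k) := by
    constructor
    · rintro ⟨k, hk⟩
      exact ⟨k - m, by push_cast; linarith⟩
    · rintro ⟨k, hk⟩
      exact ⟨k + m, by push_cast; linarith⟩
  simp only [h, Int.fract_add_intCast]

lemma saw_zero : saw 0 = 0 := by
  unfold saw
  exact if_pos ⟨0, by simp⟩

lemma saw_div (m a : ℕ) (ha : 0 < a) (h : ¬ a ∣ m) :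
    saw ((m : ℝ) / a) = ((m % a : ℕ) : ℝ) / a - 1 / 2 := by
  unfold saw
  rw [if_neg, Int.fract_div_natCast_eq_div_natCast_mod]
  rintro ⟨k, hk⟩
  have ha' : (a : ℝ) ≠ 0 := by positivity
  rw [div_eq_iff ha'] at hk
  apply h
  have : (m : ℤ) = k * a := by exact_mod_cast hk
  exact Int.natCast_dvd_natCast.mp ⟨k, by rw [this]; ring⟩

lemma dedekindSum_add_mul (b a c : ℤ) (ha : 0 < a) :
    dedekindSum (b + c * a) a = dedekindSum b a := by
  unfold dedekindSum dedekindRademacher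
  refine Finset.sum_congr rfl fun k _ => ?_
  congr 1
  rw [← saw_add_int (0 + (b : ℝ) / a * (k + 0)) (c * k)]
  congr 1
  have : (a : ℝ) ≠ 0 := by exact_mod_cast ha.ne'
  push_cast
  field_simp
  ring

lemma sum_mod_perm (a b : ℕ) (ha : 0 < a) (h : Nat.Coprime a b) (F : ℕ → ℝ) :
    ∑ k ∈ Finset.range a, F ((b * k) % a) = ∑ k ∈ Finset.range a, F k := by
  have hmaps : Set.MapsTo (fun k => (b * k) % a) (Finset.range a : Set ℕ) (Finset.range a : Set ℕ) := by
    intro k _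
    simpa using Nat.mod_lt _ ha
  have hinj : Set.InjOn (fun k => (b * k) % a) (Finset.range a : Set ℕ) := by
    intro x hx y hy hxy
    simp only [Finset.coe_range, Set.mem_Iio] at hx hy
    have h1 : b * x ≡ b * y [MOD a] := hxy
    have h2 : x ≡ y [MOD a] := Nat.ModEq.cancel_left_of_coprime h h1
    exact Nat.ModEq.eq_of_lt_of_lt h2 hx hy
  refine Finset.sum_nbij (fun k => (b * k) % a) hmaps hinj ?_ (fun _ _ => rfl)
  exact Finset.surjOn_of_injOn_of_card_le _ hmaps hinj le_rfl

lemma sum_id (a : ℕ) : ∑ k ∈ Finset.range a, (k : ℝ) = a * (a - 1) / 2 := by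
  induction a with
  | zero => simp
  | succ n ih => rw [Finset.sum_range_succ, ih]; push_cast; ring

lemma sum_sq (a : ℕ) : ∑ k ∈ Finset.range a, (k : ℝ) ^ 2 = a * (a - 1) * (2 * a - 1) / 6 := by
  induction a with
  | zero => simp
  | succ n ih => rw [Finset.sum_range_succ, ih]; push_cast; ring

lemma sum_odd (m : ℕ) : ∑ l ∈ Finset.Icc 1 m, (2 * (l : ℝ) - 1) = (m : ℝ) ^ 2 := by
  induction m with
  | zero => simp
  | succ n ih => rw [Finset.sum_Icc_succ_top (by omega), ih]; push_cast; ring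

lemma mod_real (b k a : ℕ) :
    (((b * k) % a : ℕ) : ℝ) = b * k - a * ((b * k / a : ℕ) : ℝ) := by
  have := Nat.div_add_mod (b * k) a
  have h2 : (a : ℝ) * ((b * k / a : ℕ) : ℝ) + (((b * k) % a : ℕ) : ℝ) = b * k := by
    exact_mod_cast this
  linarith

/-- Sum of floors. -/
lemma sum_floor (a b : ℕ) (ha : 0 < a) (h : Nat.Coprime a b) :
    ∑ k ∈ Finset.range a, ((b * k / a : ℕ) : ℝ) = (a - 1) * (b - 1) / 2 := by
  have h1 := sum_mod_perm a b ha h (fun k => (k : ℝ))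
  simp only [mod_real, Finset.sum_sub_distrib, ← Finset.mul_sum, sum_id] at h1
  have ha' : (a : ℝ) ≠ 0 := by positivity
  apply mul_left_cancel₀ ha'
  linarith

lemma sum_floor_sq (a b : ℕ) (ha : 0 < a) (h : Nat.Coprime a b) :
    (b : ℝ) ^ 2 * (a * (a - 1) * (2 * a - 1) / 6)
      - 2 * a * b * ∑ k ∈ Finset.range a, (k : ℝ) * ((b * k / a : ℕ) : ℝ)
      + a ^ 2 * ∑ k ∈ Finset.range a, ((b * k / a : ℕ) : ℝ) ^ 2
      = a * (a - 1) * (2 * a - 1) / 6 := by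
  have h1 := sum_mod_perm a b ha h (fun k => (k : ℝ) ^ 2)
  simp only [mod_real] at h1
  rw [← sum_sq]
  refine Eq.trans ?_ h1
  rw [Finset.mul_sum, Finset.mul_sum, Finset.mul_sum, ← Finset.sum_sub_distrib,
    ← Finset.sum_add_distrib]
  refine Finset.sum_congr rfl fun k _ => ?_
  ring

/-- Double counting. -/
lemma sum_floor_sq' (a b : ℕ) (ha : 0 < a) (hb : 0 < b) (h : Nat.Coprime a b) :
    ∑ k ∈ Finset.range a, ((b * k / a : ℕ) : ℝ) ^ 2
      = ∑ l ∈ Finset.range b, (2 * (l : ℝ) - 1) * ((a - 1) - ((a * l / b : ℕ) : ℝ)) + (a - 1) := by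
  have e1 : ∀ k ∈ Finset.range a, ((b * k / a : ℕ) : ℝ) ^ 2
      = ∑ l ∈ Finset.Ico 1 b, if l * a ≤ b * k then (2 * (l : ℝ) - 1) else 0 := by
    intro k hk
    rw [← sum_odd, ← Finset.sum_filter]
    refine Finset.sum_congr ?_ fun _ _ => rfl
    ext l
    simp only [Finset.mem_Icc, Finset.mem_filter, Finset.mem_Ico, Nat.le_div_iff_mul_le ha]
    simp only [Finset.mem_range] at hk
    constructor
    · rintro ⟨h1, h2⟩
      refine ⟨⟨h1, ?_⟩, h2⟩
      by_contra hc
      push Not at hc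
      nlinarith
    · rintro ⟨⟨h1, _⟩, h2⟩
      exact ⟨h1, h2⟩
  rw [Finset.sum_congr rfl e1, Finset.sum_comm]
  have e2 : ∀ l ∈ Finset.Ico 1 b, (∑ k ∈ Finset.range a, if l * a ≤ b * k then (2 * (l : ℝ) - 1) else 0)
      = (2 * (l : ℝ) - 1) * ((a - 1) - ((a * l / b : ℕ) : ℝ)) := by
    intro l hl
    simp only [Finset.mem_Ico] at hl
    rw [← Finset.sum_filter]
    have : Finset.filter (fun k => l * a ≤ b * k) (Finset.range a) = Finset.Ico (a * l / b + 1) a := by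
      ext k
      simp only [Finset.mem_filter, Finset.mem_range, Finset.mem_Ico, Nat.succ_le_iff,
        Nat.div_lt_iff_lt_mul hb]
      constructor
      · rintro ⟨h1, h2⟩
        refine ⟨lt_of_le_of_ne (by linarith) ?_, h1⟩
        intro hc
        have : b ∣ l := (h.symm).dvd_of_dvd_mul_left ⟨k, by rw [hc]; ring⟩
        have := Nat.le_of_dvd (by omega) this
        omega
      · rintro ⟨h1, h2⟩
        exact ⟨h2, by linarith⟩
    have hlt : a * l / b < a := by
      rw [Nat.div_lt_iff_lt_mul hb]
      exact Nat.mul_lt_mul_of_pos_left hl.2 ha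
    rw [this, Finset.sum_const, Nat.card_Ico, nsmul_eq_mul, Nat.cast_sub hlt]
    push_cast
    ring
  rw [Finset.sum_congr rfl e2, Finset.range_eq_Ico, Finset.sum_eq_sum_Ico_succ_bot hb]
  simp
  ring

lemma dedekindSum_nat (a b : ℕ) (ha : 0 < a) (h : Nat.Coprime a b) :
    (a : ℝ) ^ 2 * dedekindSum b a = b * (a * (a - 1) * (2 * a - 1) / 6)
      - a * ∑ k ∈ Finset.range a, (k : ℝ) * ((b * k / a : ℕ) : ℝ)
      - a * (a * (a - 1) / 2) + a ^ 3 / 4 - a ^ 2 / 4 := by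
  have ha' : (a : ℝ) ≠ 0 := by positivity
  have e : ∀ k ∈ Finset.range a,
      saw (0 + (((b : ℤ) : ℝ)) / ((a : ℤ) : ℝ) * ((k : ℝ) + 0)) * saw (((k : ℝ) + 0) / ((a : ℤ) : ℝ))
      = ((((b * k) % a : ℕ) : ℝ) / a - 1 / 2) * ((k : ℝ) / a - 1 / 2)
        - if k = 0 then 1 / 4 else 0 := by
    intro k hk
    simp only [Finset.mem_range] at hk
    by_cases h0 : k = 0
    · subst h0
      simp [saw_zero]
      norm_num
    · have hnd : ¬ a ∣ k := fun hd => by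
        have := Nat.le_of_dvd (by omega) hd
        omega
      have hnd2 : ¬ a ∣ b * k := fun hd => hnd (h.dvd_of_dvd_mul_left hd)
      have r1 : 0 + (((b : ℤ) : ℝ)) / ((a : ℤ) : ℝ) * ((k : ℝ) + 0) = ((b * k : ℕ) : ℝ) / a := by
        push_cast; ring
      have r2 : ((k : ℝ) + 0) / ((a : ℤ) : ℝ) = (k : ℝ) / a := by push_cast; ring
      rw [r1, r2, saw_div _ _ ha hnd2, saw_div _ _ ha hnd, Nat.mod_eq_of_lt hk]
      simp [h0]
  unfold dedekindSum dedekindRademacher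
  rw [Int.natAbs_natCast, Finset.sum_congr rfl e, Finset.sum_sub_distrib, Finset.sum_ite_eq',
    if_pos (by simpa using ha)]
  have e3 : (a : ℝ) ^ 2 * ∑ k ∈ Finset.range a,
      ((((b * k) % a : ℕ) : ℝ) / a - 1 / 2) * ((k : ℝ) / a - 1 / 2)
      = b * ∑ k ∈ Finset.range a, (k : ℝ) ^ 2
        - a * ∑ k ∈ Finset.range a, (k : ℝ) * ((b * k / a : ℕ) : ℝ)
        - a / 2 * ∑ k ∈ Finset.range a, (((b * k) % a : ℕ) : ℝ)
        - a / 2 * ∑ k ∈ Finset.range a, (k : ℝ) + ∑ k ∈ Finset.range a, (a : ℝ) ^ 2 / 4 := by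
    simp only [Finset.mul_sum]
    rw [← Finset.sum_sub_distrib, ← Finset.sum_sub_distrib, ← Finset.sum_sub_distrib,
      ← Finset.sum_add_distrib]
    refine Finset.sum_congr rfl fun k _ => ?_
    rw [mod_real]
    field_simp
    ring
  rw [mul_sub, e3, sum_mod_perm a b ha h (fun k => (k : ℝ)), sum_id, sum_sq, Finset.sum_const,
    Finset.card_range, nsmul_eq_mul]
  ring

lemma reciprocity_nat (a b : ℕ) (ha : 0 < a) (hb : 0 < b) (h : Nat.Coprime a b) :
    dedekindSum b a + dedekindSum a b
      = -1 / 4 + ((a : ℝ) / b + b / a + 1 / (a * b)) / 12 := by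
  have ha' : (a : ℝ) ≠ 0 := by positivity
  have hb' : (b : ℝ) ≠ 0 := by positivity
  have h1 := dedekindSum_nat a b ha h
  have h2 := dedekindSum_nat b a hb h.symm
  have h3 := sum_floor_sq a b ha h
  have h4 := sum_floor_sq' a b ha hb h
  have h5 := sum_floor b a hb h.symm
  have h6 : ∑ l ∈ Finset.range b, (2 * (l : ℝ) - 1) * ((a - 1) - ((a * l / b : ℕ) : ℝ))
      = (a - 1) * (b * (b - 1)) - (a - 1) * b
        - 2 * ∑ l ∈ Finset.range b, (l : ℝ) * ((a * l / b : ℕ) : ℝ)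
        + (b - 1) * (a - 1) / 2 := by
    have : ∀ l ∈ Finset.range b, (2 * (l : ℝ) - 1) * ((a - 1) - ((a * l / b : ℕ) : ℝ))
      = 2 * (a - 1) * (l : ℝ) - (a - 1) - 2 * ((l : ℝ) * ((a * l / b : ℕ) : ℝ)) + ((a * l / b : ℕ) : ℝ) := by
      intro l _; ring
    rw [Finset.sum_congr rfl this, Finset.sum_add_distrib, Finset.sum_sub_distrib,
      Finset.sum_sub_distrib, ← Finset.mul_sum, ← Finset.mul_sum, sum_id, h5, Finset.sum_const,
      Finset.card_range, nsmul_eq_mul]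
    ring
  rw [h6] at h4
  rw [h4] at h3
  generalize ∑ l ∈ Finset.range b, (l : ℝ) * ((a * l / b : ℕ) : ℝ) = P' at *
  generalize ∑ k ∈ Finset.range a, (k : ℝ) * ((b * k / a : ℕ) : ℝ) = P at *
  generalize dedekindSum b a = D at *
  generalize dedekindSum a b = D' at *
  have h7 : (a : ℝ) ^ 2 * b ^ 2 * (D + D') = a ^ 2 * b ^ 2 *
      (-1 / 4 + ((a : ℝ) / b + b / a + 1 / (a * b)) / 12) := by
    have : (a : ℝ) ^ 2 * b ^ 2 * (-1 / 4 + ((a : ℝ) / b + b / a + 1 / (a * b)) / 12)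
      = - a ^ 2 * b ^ 2 / 4 + (a ^ 3 * b + a * b ^ 3 + a * b) / 12 := by
      field_simp
    rw [this]
    linear_combination (b : ℝ) ^ 2 * h1 + (a : ℝ) ^ 2 * h2 + (b : ℝ) / 2 * h3
  exact mul_left_cancel₀ (by positivity) h7

lemma reciprocity (a b : ℤ) (ha : 0 < a) (hb : 0 < b) (h : IsCoprime a b) :
    dedekindSum b a = -1 / 4 + ((a : ℝ) / b + b / a + 1 / (a * b)) / 12 - dedekindSum a b := by
  lift a to ℕ using ha.le
  lift b to ℕ using hb.le
  have := reciprocity_nat a b (by exact_mod_cast ha) (by exact_mod_cast hb)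
    (Nat.isCoprime_iff_coprime.mp h)
  push_cast
  linarith

lemma dedekindSum_one_right (a : ℤ) : dedekindSum a 1 = 0 := by
  simp [dedekindSum, dedekindRademacher, saw_zero]

lemma dedekindSum_one_left (a : ℤ) (ha : 0 < a) :
    dedekindSum 1 a = ((a : ℝ) ^ 2 + 2) / (12 * a) - 1 / 4 := by
  have ha' : (a : ℝ) ≠ 0 := by exact_mod_cast ha.ne'
  rw [reciprocity a 1 ha one_pos isCoprime_one_right, dedekindSum_one_right]
  push_cast
  field_simp
  ring

/-- Euclidean-algorithm evaluation of the ordinary Dedekind sum `s(b, a)`. -/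
theorem stmt_8 (a b : ℤ) (hab : b < a) (hb : 0 < b) (hcop : Int.gcd a b = 1)
    (n : ℕ) (hn : 2 ≤ n)
    (aSeq q s : ℕ → ℤ)
    (ha0 : aSeq 0 = a) (ha1 : aSeq 1 = b)
    (hapos : ∀ j ≤ n, 0 < aSeq j)
    (hqpos : ∀ j, 1 ≤ j → j ≤ n - 1 → 0 < q j)
    (harec : ∀ j, 2 ≤ j → j ≤ n → aSeq j = aSeq (j - 2) - q (j - 1) * aSeq (j - 1))
    (han : aSeq n = 1)
    (hs0 : s 0 = 0) (hs1 : s 1 = 1)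
    (hsrec : ∀ j, 2 ≤ j → j ≤ n - 1 → s j = q (j - 1) * s (j - 1) + s (j - 2)) :
    dedekindSum b a =
      (-1 : ℝ) ^ (n - 1) * ((aSeq (n - 1) : ℝ) ^ 2 + 2) / (12 * (aSeq (n - 1) : ℝ))
      + (aSeq 1 : ℝ) / (12 * (aSeq 0 : ℝ))
      + (-1 : ℝ) ^ n * (aSeq (n - 2) : ℝ) / (12 * (aSeq (n - 1) : ℝ))
      + (-1 : ℝ) ^ n * (s (n - 1) : ℝ) / (12 * (aSeq 0 : ℝ) * (aSeq (n - 1) : ℝ))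
      + (∑ j ∈ Finset.Icc 1 (n - 2), (-1 : ℝ) ^ (j - 1) * (q j : ℝ) / 12)
      + (if Odd n then (-1 / 4 : ℝ) else 0) := by
  have hcopr : ∀ j, j + 1 ≤ n → IsCoprime (aSeq j) (aSeq (j + 1)) := by
    intro j
    induction j with
    | zero =>
      intro _
      rw [zero_add, ha0, ha1]
      exact Int.isCoprime_iff_gcd_eq_one.mpr hcop
    | succ j ih =>
      intro hj
      obtain ⟨u, v, huv⟩ := ih (by omega)
      have hr := harec (j + 2) (by omega) hj
      simp only [Nat.add_sub_cancel, show j + 2 - 1 = j + 1 by omega] at hr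
      refine ⟨v + u * q (j + 1), u, ?_⟩
      rw [show j + 1 + 1 = j + 2 by omega, hr]
      linear_combination huv
  have hinv : ∀ i, i + 2 ≤ n → s (i + 1) * aSeq i + s i * aSeq (i + 1) = aSeq 0 := by
    intro i
    induction i with
    | zero => intro _; simp [hs0, hs1]
    | succ i ih =>
      intro hi
      have h1 := ih (by omega)
      have hr := harec (i + 2) (by omega) (by omega)
      have hsr := hsrec (i + 2) (by omega) (by omega)
      simp only [Nat.add_sub_cancel, show i + 2 - 1 = i + 1 by omega] at hr hsr
      rw [show i + 1 + 1 = i + 2 by omega, hr, hsr]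
      linear_combination h1
  have hstep : ∀ j, j + 2 ≤ n → dedekindSum (aSeq (j + 1)) (aSeq j)
      = -1 / 4 + ((aSeq j : ℝ) / aSeq (j + 1) + aSeq (j + 1) / aSeq j
        + 1 / (aSeq j * aSeq (j + 1))) / 12 - dedekindSum (aSeq (j + 2)) (aSeq (j + 1)) := by
    intro j hj
    rw [reciprocity _ _ (hapos j (by omega)) (hapos (j + 1) (by omega)) (hcopr j (by omega))]
    have hr := harec (j + 2) (by omega) hj
    simp only [Nat.add_sub_cancel, show j + 2 - 1 = j + 1 by omega] at hr
    rw [← dedekindSum_add_mul (aSeq (j + 2)) _ (q (j + 1)) (hapos (j + 1) (by omega)), hr]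
    simp
  have hR : ∀ j ≤ n, (aSeq j : ℝ) ≠ 0 := fun j hj => by exact_mod_cast (hapos j hj).ne'
  have key : ∀ i, i + 2 ≤ n → dedekindSum (aSeq 1) (aSeq 0) =
      (aSeq 1 : ℝ) / (12 * (aSeq 0 : ℝ))
      + (-1 : ℝ) ^ i * (aSeq i : ℝ) / (12 * (aSeq (i + 1) : ℝ))
      + (-1 : ℝ) ^ i * (s (i + 1) : ℝ) / (12 * (aSeq 0 : ℝ) * (aSeq (i + 1) : ℝ))
      + (∑ j ∈ Finset.Icc 1 i, (-1 : ℝ) ^ (j - 1) * (q j : ℝ) / 12)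
      + (-1 / 8 - (-1 : ℝ) ^ i / 8)
      + (-1 : ℝ) ^ (i + 1) * dedekindSum (aSeq (i + 2)) (aSeq (i + 1)) := by
    intro i
    induction i with
    | zero =>
      intro hi
      have h0 := hR 0 (by omega)
      have h1 := hR 1 (by omega)
      have := hstep 0 hi
      rw [zero_add] at this
      rw [this]
      simp [hs1]
      field_simp
      ring
    | succ i ih =>
      intro hi
      have h0 := hR 0 (by omega)
      have h1 := hR (i + 1) (by omega)
      have h2 := hR (i + 2) (by omega)
      have hst := hstep (i + 1) hi
      have hv : (s (i + 2) : ℝ) * aSeq (i + 1) + s (i + 1) * aSeq (i + 2) = aSeq 0 := by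
        exact_mod_cast hinv (i + 1) hi
      have hr := harec (i + 2) (by omega) (by omega)
      simp only [Nat.add_sub_cancel, show i + 2 - 1 = i + 1 by omega] at hr
      have hr' : (aSeq i : ℝ) = aSeq (i + 2) + q (i + 1) * aSeq (i + 1) := by
        rw [hr]; push_cast; ring
      rw [ih (by omega), Finset.sum_Icc_succ_top (by omega)]
      simp only [show i + 1 + 1 = i + 2 by omega, show i + 1 + 2 = i + 3 by omega,
        Nat.add_sub_cancel] at hst ⊢
      rw [hst, hr', pow_succ (-1 : ℝ) (i + 1), pow_succ (-1 : ℝ) i]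
      have e1 : (1 : ℝ) / (aSeq (i + 1) * aSeq (i + 2))
          = s (i + 2) / (aSeq 0 * aSeq (i + 2)) + s (i + 1) / (aSeq 0 * aSeq (i + 1)) := by
        field_simp
        linear_combination -hv
      rw [e1]
      field_simp
      ring
  obtain ⟨m, rfl⟩ : ∃ m, n = m + 2 := ⟨n - 2, by omega⟩
  have hk := key m le_rfl
  rw [han, dedekindSum_one_left _ (hapos (m + 1) (by omega)), ha0, ha1] at hk
  rw [hk, ha0, ha1]
  simp only [Nat.add_sub_cancel, show m + 2 - 1 = m + 1 by omega]
  have hE : (if Odd (m + 2) then (-1 / 4 : ℝ) else 0) = -1 / 8 + (-1 : ℝ) ^ m / 8 := by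
    rcases Nat.even_or_odd m with hm | hm
    · rw [hm.neg_one_pow, if_neg (by rw [Nat.not_odd_iff_even]; exact hm.add even_two)]
      norm_num
    · rw [hm.neg_one_pow, if_pos (hm.add_even even_two)]
      norm_num
  rw [hE, pow_succ, pow_add]
  ring
end

section
/- Let p ≥ 5 be a prime. Then the Dedekind sum s(10p−1, 12p−1) equals (−4p² − 1)/(24p − 2). -/
open Real
open scoped Classical

lemma saw_of_int (m : ℤ) (x : ℝ) (h : x = m) : saw x = 0 := by
  unfold saw
  rw [if_pos ⟨m, h⟩]

lemma saw_of_add (m : ℤ) (x y : ℝ) (h : x = m + y) (h0 : 0 < y) (h1 : y < 1) :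
    saw x = y - 1 / 2 := by
  have hf : Int.fract x = y := by
    rw [h, Int.fract_intCast_add]
    exact Int.fract_eq_self.2 ⟨h0.le, h1⟩
  unfold saw
  rw [if_neg, hf]
  rintro ⟨n, hn⟩
  rw [hn, Int.fract_intCast] at hf
  linarith

lemma sum_six (f : ℕ → ℝ) (n : ℕ) :
    ∑ k ∈ Finset.range (6 * n), f k
      = ∑ q ∈ Finset.range n, ∑ r ∈ Finset.range 6, f (6 * q + r) := by
  induction n with
  | zero => simp
  | succ n ih =>
    rw [Finset.sum_range_succ, ← ih, Nat.mul_succ, Finset.sum_range_add]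

lemma term_eq (p q r : ℕ) (hq : q < 2 * p) (hr : r < 6) (a : ℝ) (ha : a = 12 * p - 1) :
    saw (0 + (10 * p - 1) / a * (((6 * q + r : ℕ) : ℝ) + 0)) *
      saw ((((6 * q + r : ℕ) : ℝ) + 0) / a)
    = -(((q + 2 * p * r) / a - 1 / 2) * ((6 * q + r) / a - 1 / 2))
      + (if q = 0 then (if r = 0 then 1 / 4 else 0) else 0)
      + (if q = 2 * p - 1 then (if r = 5 then 1 / 4 else 0) else 0) := by
  have hp1 : (1 : ℝ) ≤ p := by
    have : 1 ≤ p := by omega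
    exact_mod_cast this
  have hapos : 0 < a := by linarith
  by_cases h0 : q = 0 ∧ r = 0
  · obtain ⟨rfl, rfl⟩ := h0
    rw [saw_of_int 0 ((((6 * 0 + 0 : ℕ) : ℝ) + 0) / a) (by simp)]
    have : ¬ (0 = 2 * p - 1) := by omega
    simp [this]
    norm_num
  by_cases h1 : q = 2 * p - 1 ∧ r = 5
  · obtain ⟨hq', rfl⟩ := h1
    have hq0 : ¬ q = 0 := by omega
    have hqr : (q : ℝ) = 2 * p - 1 := by
      have : q + 1 = 2 * p := by omega
      have : (q : ℝ) + 1 = 2 * p := by exact_mod_cast this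
      linarith
    rw [saw_of_int 1 ((((6 * q + 5 : ℕ) : ℝ) + 0) / a)
      (by push_cast; rw [hqr, ha]; rw [div_eq_one_iff_eq] <;> linarith)]
    rw [if_neg hq0, if_pos hq', if_pos rfl, hqr]
    have e1 : (2 * (p : ℝ) - 1 + 2 * p * (5 : ℕ)) / a = 1 := by
      rw [div_eq_one_iff_eq hapos.ne']; push_cast; linarith
    have e2 : (6 * (2 * (p : ℝ) - 1) + (5 : ℕ)) / a = 1 := by
      rw [div_eq_one_iff_eq hapos.ne']; push_cast; linarith
    rw [e1, e2]; norm_num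
  have hc0 : (if q = 0 then (if r = 0 then (1 / 4 : ℝ) else 0) else 0) = 0 := by
    split_ifs <;> simp_all
  have hc1 : (if q = 2 * p - 1 then (if r = 5 then (1 / 4 : ℝ) else 0) else 0) = 0 := by
    split_ifs <;> simp_all
  rw [hc0, hc1]
  have k0 : 0 < 6 * q + r := by omega
  have k1 : 6 * q + r + 1 < 12 * p := by omega
  have k0' : (0 : ℝ) < 6 * q + r := by exact_mod_cast k0
  have k1' : (6 * q + r : ℝ) + 1 < 12 * p := by exact_mod_cast k1
  have l0 : 0 < q + 2 * p * r := by
    rcases Nat.eq_zero_or_pos q with h | h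
    · have : 0 < r := by omega
      have : 0 < p := by omega
      positivity
    · positivity
  have l1 : q + 2 * p * r + 1 < 12 * p := by
    interval_cases r <;> omega
  have l0' : (0 : ℝ) < q + 2 * p * r := by exact_mod_cast l0
  have l1' : (q + 2 * p * r : ℝ) + 1 < 12 * p := by exact_mod_cast l1
  rw [saw_of_add 0 ((((6 * q + r : ℕ) : ℝ) + 0) / a) ((6 * q + r) / a) (by push_cast; ring) (by positivity)
    (by rw [div_lt_one hapos]; linarith)]
  rw [saw_of_add (5 * q + r - 1) _ (1 - (q + 2 * p * r) / a) ?_ ?_ ?_]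
  · ring
  · push_cast
    field_simp
    rw [ha]; ring
  · have : (q + 2 * p * r : ℝ) / a < 1 := by rw [div_lt_one hapos]; linarith
    linarith
  · have : 0 < (q + 2 * p * r : ℝ) / a := by positivity
    linarith

lemma poly_sum (p a : ℝ) (ha : a ≠ 0) (n : ℕ) :
    ∑ q ∈ Finset.range n, ∑ r ∈ Finset.range 6,
      -((((q : ℝ) + 2 * p * r) / a - 1 / 2) * ((6 * q + r) / a - 1 / 2))
    = -(6 * n * (n - 1) * (2 * n - 1) + (15 + 180 * p) * n * (n - 1) / 2
        + 110 * p * n) / a ^ 2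
      + ((42 * (n * (n - 1) / 2) + (15 + 30 * p) * n) / 2) / a - 6 * n / 4 := by
  induction n with
  | zero => simp
  | succ n ih =>
    rw [Finset.sum_range_succ, ih]
    simp only [Finset.sum_range_succ, Finset.sum_range_zero]
    push_cast
    field_simp
    ring

/-- For a prime `p ≥ 5`, `s(10p−1, 12p−1) = (−4p² − 1)/(24p − 2)`. -/
theorem stmt_9 (p : ℕ) (hp : p.Prime) (hp5 : 5 ≤ p) :
    dedekindSum (10 * (p : ℤ) - 1) (12 * (p : ℤ) - 1) =
      (-4 * (p : ℝ) ^ 2 - 1) / (24 * (p : ℝ) - 2) := by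
  have hp1 : (5 : ℝ) ≤ p := by exact_mod_cast hp5
  have hN : (12 * (p : ℤ) - 1).natAbs = 12 * p - 1 := by omega
  unfold dedekindSum dedekindRademacher
  rw [hN]
  push_cast
  obtain ⟨a, ha⟩ : ∃ a : ℝ, a = 12 * p - 1 := ⟨_, rfl⟩
  rw [← ha]
  have hapos : 0 < a := by linarith
  set f : ℕ → ℝ := fun k => saw (0 + (10 * p - 1) / a * ((k : ℝ) + 0)) *
      saw (((k : ℝ) + 0) / a) with hf
  have hlast : f (12 * p - 1) = 0 := by
    have hc : ((12 * p - 1 : ℕ) : ℝ) = a := by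
      rw [Nat.cast_sub (by omega)]; push_cast; exact ha.symm
    simp only [hf]
    rw [hc, saw_of_int 1 ((a + 0) / a) (by simp [hapos.ne'])]
    simp
  have hs : ∑ k ∈ Finset.range (12 * p - 1), f k = ∑ k ∈ Finset.range (6 * (2 * p)), f k := by
    have : 6 * (2 * p) = (12 * p - 1) + 1 := by omega
    rw [this, Finset.sum_range_succ, hlast, add_zero]
  change ∑ k ∈ Finset.range (12 * p - 1), f k = _
  rw [hs, sum_six]
  rw [Finset.sum_congr rfl (fun q hq => Finset.sum_congr rfl (fun r hr =>
    term_eq p q r (Finset.mem_range.1 hq) (Finset.mem_range.1 hr) a ha))]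
  simp only [Finset.sum_add_distrib]
  rw [poly_sum p a hapos.ne']
  have c0 : ∑ q ∈ Finset.range (2 * p), ∑ r ∈ Finset.range 6,
      (if q = 0 then (if r = 0 then (1 / 4 : ℝ) else 0) else 0) = 1 / 4 := by
    rw [Finset.sum_eq_single 0]
    · simp
    · intro b _ hb; simp [hb]
    · intro h; exact absurd (Finset.mem_range.2 (by omega)) h
  have c1 : ∑ q ∈ Finset.range (2 * p), ∑ r ∈ Finset.range 6,
      (if q = 2 * p - 1 then (if r = 5 then (1 / 4 : ℝ) else 0) else 0) = 1 / 4 := by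
    rw [Finset.sum_eq_single (2 * p - 1)]
    · simp
    · intro b _ hb; simp [hb]
    · intro h; exact absurd (Finset.mem_range.2 (by omega)) h
  rw [c0, c1]
  have h24 : (24 * (p : ℝ) - 2) = 2 * a := by rw [ha]; ring
  rw [h24]
  push_cast
  field_simp
  rw [ha]
  ring
end

section
/- Let p ≥ 5 be a prime. Then the Dedekind sum s(p, 6p+1) equals (−p² + 6p)/(12p + 2). -/
open Real
open scoped Classical

lemma saw_of_frac (x : ℝ) (q : ℤ) (t : ℝ) (h0 : 0 < t) (h1 : t < 1) (hx : x = q + t) :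
    saw x = t - 1 / 2 := by
  have hf : Int.fract x = t := by
    rw [hx, Int.fract_intCast_add]
    exact Int.fract_eq_self.2 ⟨h0.le, h1⟩
  unfold saw
  rw [if_neg, hf]
  rintro ⟨m, hm⟩
  rw [hm, Int.fract_intCast] at hf
  linarith

lemma term_eq_s10 (p j r : ℕ) (hj : j < p) (hr : 1 ≤ r) (hr6 : r ≤ 6) :
    saw ((p : ℝ) / (6 * p + 1) * ((6 * j + r : ℕ) : ℝ)) *
      saw (((6 * j + r : ℕ) : ℝ) / (6 * p + 1)) =
    (((p : ℝ) * r - j) / (6 * p + 1) - 1 / 2) * ((6 * (j : ℝ) + r) / (6 * p + 1) - 1 / 2) := by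
  have hj' : (j : ℝ) + 1 ≤ p := by exact_mod_cast hj
  have hr' : (1 : ℝ) ≤ r := by exact_mod_cast hr
  have hr6' : (r : ℝ) ≤ 6 := by exact_mod_cast hr6
  have hj0 : (0 : ℝ) ≤ j := Nat.cast_nonneg j
  have ha : (0 : ℝ) < 6 * p + 1 := by positivity
  rw [saw_of_frac _ (j : ℤ) (((p : ℝ) * r - j) / (6 * p + 1)),
    saw_of_frac _ 0 ((6 * (j : ℝ) + r) / (6 * p + 1))]
  · positivity
  · rw [div_lt_one ha]; linarith
  · push_cast; ring
  · apply div_pos _ ha; nlinarith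
  · rw [div_lt_one ha]; nlinarith
  · push_cast; field_simp; ring

lemma partial_sum (p n : ℕ) (hn : n ≤ p) :
    ∑ k ∈ Finset.range (6 * n), saw ((p : ℝ) / (6 * p + 1) * ((k + 1 : ℕ) : ℝ)) *
      saw (((k + 1 : ℕ) : ℝ) / (6 * p + 1)) =
    ((364 * (p : ℝ) - 42 * p * (6 * p + 1) - 42 * (6 * p + 1) + 6 * (6 * p + 1) ^ 2) * n
      + (12 * (42 * p - 6 * (6 * p + 1)) - 2 * (42 - 6 * (6 * p + 1))) * (n * (n - 1) / 2)
      - 24 * ((n - 1) * n * (2 * n - 1))) / (4 * (6 * p + 1) ^ 2) := by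
  induction n with
  | zero => simp
  | succ n ih =>
    have ha : (6 * (p : ℝ) + 1) ≠ 0 := by positivity
    rw [show 6 * (n + 1) = 6 * n + 1 + 1 + 1 + 1 + 1 + 1 by ring]
    simp only [Finset.sum_range_succ]
    rw [ih (by omega)]
    simp only [add_assoc, Nat.reduceAdd]
    simp only [← add_assoc]
    rw [term_eq_s10 p n 1 (by omega) (by omega) (by omega),
      term_eq_s10 p n 2 (by omega) (by omega) (by omega),
      term_eq_s10 p n 3 (by omega) (by omega) (by omega),
      term_eq_s10 p n 4 (by omega) (by omega) (by omega),
      term_eq_s10 p n 5 (by omega) (by omega) (by omega),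
      term_eq_s10 p n 6 (by omega) (by omega) (by omega)]
    push_cast
    field_simp
    ring

/-- For a prime `p ≥ 5`, `s(p, 6p+1) = (−p² + 6p)/(12p + 2)`. -/
theorem stmt_10 (p : ℕ) (hp : p.Prime) (hp5 : 5 ≤ p) :
    dedekindSum (p : ℤ) (6 * (p : ℤ) + 1) =
      (-(p : ℝ) ^ 2 + 6 * (p : ℝ)) / (12 * (p : ℝ) + 2) := by
  have ha : (6 * (p : ℝ) + 1) ≠ 0 := by positivity
  have ha2 : (12 * (p : ℝ) + 2) ≠ 0 := by positivity
  have h0 : saw 0 = 0 := by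
    unfold saw
    rw [if_pos ⟨0, by simp⟩]
  unfold dedekindSum dedekindRademacher
  rw [show (6 * (p : ℤ) + 1).natAbs = 6 * p + 1 by omega, Finset.sum_range_succ']
  have := partial_sum p p le_rfl
  push_cast at this ⊢
  simp only [zero_add, add_zero, zero_div, mul_zero, h0]
  rw [this]
  field_simp
  ring
end

section
/- Let p ≥ 2 be an even integer. Then S(1, 1, p; −1) = (−p² − 2)/(6p); that is, (1/p) Σ_{j=1}^{p−1} (−1)^j csc²(jπ/p) = −(p² + 2)/(6p). -/
open Real

/-- The Dedekind cosecant sum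
`S(q,r,p;ε) = (1/p) ∑_{j=1}^{|p|−1} ε^j csc(jqπ/p) csc(jrπ/p)`. -/
noncomputable def cosecSum (q r p : ℤ) (ε : ℝ) : ℝ :=
  (1 / (p : ℝ)) * ∑ j ∈ Finset.Icc 1 (p.natAbs - 1),
    ε ^ j * (1 / Real.sin ((j : ℝ) * (q : ℝ) * π / (p : ℝ))) *
      (1 / Real.sin ((j : ℝ) * (r : ℝ) * π / (p : ℝ)))

lemma two_sin_mul_sum (x : ℝ) (m : ℕ) :
    2 * sin x * ∑ k ∈ Finset.range m, cos (2 * k * x) = sin ((2 * m - 1) * x) + sin x := by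
  induction m with
  | zero => simp
  | succ m ih =>
    rw [Finset.sum_range_succ, mul_add, ih]
    have h1 : ((2 * ((m + 1 : ℕ) : ℝ) - 1) * x) = 2 * m * x + x := by push_cast; ring
    have h2 : ((2 * (m : ℝ) - 1) * x) = 2 * m * x - x := by ring
    rw [h1, h2, sin_add, sin_sub]; ring

lemma sin_pos_aux (n a : ℕ) (h0 : 0 < a) (h1 : a < n) : 0 < sin (a * π / n) := by
  have hn : (0 : ℝ) < n := by exact_mod_cast (by omega : 0 < n)
  have ha : (0 : ℝ) < a := by exact_mod_cast h0
  have han : (a : ℝ) < n := by exact_mod_cast h1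
  apply sin_pos_of_pos_of_lt_pi
  · positivity
  · rw [div_lt_iff₀ hn]; nlinarith [pi_pos]

lemma sum_cos_zero (n a : ℕ) (h0 : 0 < a) (h1 : a < n) :
    ∑ k ∈ Finset.range n, cos (2 * k * (a * π / n)) = 0 := by
  have hs := sin_pos_aux n a h0 h1
  have h := two_sin_mul_sum (a * π / n) n
  have hn : (n : ℝ) ≠ 0 := by exact_mod_cast (by omega : n ≠ 0)
  have e : (2 * (n : ℝ) - 1) * (a * π / n) = a * (2 * π) - a * π / n := by
    field_simp
  rw [e, sin_nat_mul_two_pi_sub, neg_add_cancel] at h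
  rcases mul_eq_zero.1 h with h | h
  · linarith
  · exact h

lemma sum_split (n : ℕ) (hn : 0 < n) (f : ℕ → ℝ) :
    ∑ k ∈ Finset.range n, f k = f 0 + ∑ k ∈ Finset.Icc 1 (n - 1), f k := by
  have : Finset.Icc 1 (n - 1) = Finset.Ico 1 n := by ext; simp; omega
  rw [this, Finset.range_eq_Ico, Finset.sum_eq_sum_Ico_succ_bot hn]

/-- The cosine transform of the squared cosecants. -/
noncomputable def cscF (n t : ℕ) : ℝ :=
  ∑ j ∈ Finset.Icc 1 (n - 1), cos (2 * t * (j * π / n)) * (1 / sin (j * π / n)) ^ 2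

lemma cscF_one (n : ℕ) (hn : 0 < n) : cscF n 1 = cscF n 0 - 2 * (n - 1) := by
  have : cscF n 1 - cscF n 0 = ∑ j ∈ Finset.Icc 1 (n - 1), (-2 : ℝ) := by
    unfold cscF
    rw [← Finset.sum_sub_distrib]
    refine Finset.sum_congr rfl fun j hj => ?_
    rw [Finset.mem_Icc] at hj
    have hs := (sin_pos_aux n j (by omega) (by omega)).ne'
    have e : cos (2 * ((1 : ℕ) : ℝ) * (j * π / n)) = 1 - 2 * sin (j * π / n) ^ 2 := by
      rw [Nat.cast_one, mul_one, cos_two_mul, cos_sq']; ring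
    rw [e]; simp only [Nat.cast_zero, mul_zero, zero_mul, cos_zero]
    field_simp; ring
  rw [Finset.sum_const, Nat.card_Icc, nsmul_eq_mul, Nat.sub_add_cancel (by omega),
    Nat.cast_sub (by omega)] at this
  push_cast at this; linarith

lemma cscF_rec (n t : ℕ) (ht : t + 1 < n) :
    cscF n (t + 2) = 2 * cscF n (t + 1) - cscF n t + 4 := by
  have hz := sum_cos_zero n (t + 1) (by omega) ht
  rw [sum_split n (by omega)] at hz
  simp only [Nat.cast_zero, mul_zero, zero_mul, cos_zero] at hz
  have : cscF n (t + 2) - 2 * cscF n (t + 1) + cscF n t =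
      -4 * ∑ j ∈ Finset.Icc 1 (n - 1), cos (2 * j * ((t + 1 : ℕ) * π / n)) := by
    unfold cscF
    rw [Finset.mul_sum, Finset.mul_sum, ← Finset.sum_sub_distrib, ← Finset.sum_add_distrib]
    refine Finset.sum_congr rfl fun j hj => ?_
    rw [Finset.mem_Icc] at hj
    have hs := (sin_pos_aux n j (by omega) (by omega)).ne'
    have e0 : 2 * (j : ℝ) * ((t + 1 : ℕ) * π / n) = 2 * (t + 1 : ℕ) * (j * π / n) := by ring
    rw [e0]
    set x := (j : ℝ) * π / n
    have e1 : 2 * ((t + 2 : ℕ) : ℝ) * x = 2 * (t + 1 : ℕ) * x + 2 * x := by push_cast; ring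
    have e2 : 2 * (t : ℝ) * x = 2 * (t + 1 : ℕ) * x - 2 * x := by push_cast; ring
    have e3 : cos (2 * x) = 1 - 2 * sin x ^ 2 := by rw [cos_two_mul, cos_sq']; ring
    rw [e1, e2, cos_add, cos_sub, e3]
    field_simp; ring
  linarith

lemma cscF_eq (n t : ℕ) : (t < n → cscF n t = cscF n 0 - 2 * n * t + 2 * t ^ 2) ∧
    (t + 1 < n → cscF n (t + 1) = cscF n 0 - 2 * n * (t + 1) + 2 * (t + 1) ^ 2) := by
  induction t with
  | zero =>
    refine ⟨fun _ => by simp, fun h => ?_⟩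
    rw [zero_add, cscF_one n (by omega)]; push_cast; ring
  | succ t ih =>
    refine ⟨fun h => by rw [ih.2 h]; push_cast; ring, fun h => ?_⟩
    rw [cscF_rec n t (by omega), ih.1 (by omega), ih.2 (by omega)]; push_cast; ring

lemma sum_quad (a b : ℝ) (n : ℕ) : ∑ t ∈ Finset.range n, (a - b * t + 2 * (t : ℝ) ^ 2) =
    n * a - b * (n * (n - 1) / 2) + n * (n - 1) * (2 * n - 1) / 3 := by
  induction n with
  | zero => simp
  | succ n ih => rw [Finset.sum_range_succ, ih]; push_cast; ring

lemma cscF_zero (n : ℕ) (hn : 0 < n) : cscF n 0 = ((n : ℝ) ^ 2 - 1) / 3 := by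
  have h1 : ∑ t ∈ Finset.range n, cscF n t = 0 := by
    unfold cscF
    rw [Finset.sum_comm]
    refine Finset.sum_eq_zero fun j hj => ?_
    rw [Finset.mem_Icc] at hj
    rw [← Finset.sum_mul, sum_cos_zero n j (by omega) (by omega), zero_mul]
  rw [Finset.sum_congr rfl fun t ht => (cscF_eq n t).1 (Finset.mem_range.1 ht), sum_quad] at h1
  have hn' : (n : ℝ) ≠ 0 := by exact_mod_cast hn.ne'
  apply mul_left_cancel₀ hn'
  linarith

lemma alt_sum (p : ℕ) (hp : 2 ≤ p) (heven : Even p) :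
    ∑ j ∈ Finset.Icc 1 (p - 1),
        (-1 : ℝ) ^ j * (1 / Real.sin ((j : ℝ) * π / (p : ℝ))) ^ 2 = -((p : ℝ) ^ 2 + 2) / 6 := by
  obtain ⟨m, rfl⟩ := heven
  have h := (cscF_eq (m + m) m).1 (by omega)
  rw [cscF_zero _ (by omega)] at h
  have hm : (m : ℝ) ≠ 0 := by exact_mod_cast (by omega : m ≠ 0)
  have e : cscF (m + m) m = ∑ j ∈ Finset.Icc 1 (m + m - 1),
        (-1 : ℝ) ^ j * (1 / Real.sin ((j : ℝ) * π / ((m + m : ℕ) : ℝ))) ^ 2 := by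
    unfold cscF
    refine Finset.sum_congr rfl fun j _ => ?_
    rw [← cos_nat_mul_pi]
    congr 2
    push_cast; field_simp; ring
  rw [← e, h]; push_cast; ring

/-- For even `p ≥ 2`, `S(1, 1, p; −1) = (−p² − 2)/(6p)`; that is,
`(1/p) ∑_{j=1}^{p−1} (−1)^j csc²(jπ/p) = −(p² + 2)/(6p)`. -/
theorem stmt_16 (p : ℕ) (hp : 2 ≤ p) (heven : Even p) :
    cosecSum 1 1 (p : ℤ) (-1) = (-(p : ℝ) ^ 2 - 2) / (6 * (p : ℝ)) ∧
    (1 / (p : ℝ)) * ∑ j ∈ Finset.Icc 1 (p - 1),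
        (-1 : ℝ) ^ j * (1 / Real.sin ((j : ℝ) * π / (p : ℝ))) ^ 2 =
      -((p : ℝ) ^ 2 + 2) / (6 * (p : ℝ)) := by
  have h := alt_sum p hp heven
  have hp' : (p : ℝ) ≠ 0 := by exact_mod_cast (by omega : p ≠ 0)
  have h2 : (1 / (p : ℝ)) * ∑ j ∈ Finset.Icc 1 (p - 1),
        (-1 : ℝ) ^ j * (1 / Real.sin ((j : ℝ) * π / (p : ℝ))) ^ 2 =
      -((p : ℝ) ^ 2 + 2) / (6 * (p : ℝ)) := by
    rw [h]; field_simp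
  refine ⟨?_, h2⟩
  have e : (-(p : ℝ) ^ 2 - 2) / (6 * (p : ℝ)) = -((p : ℝ) ^ 2 + 2) / (6 * (p : ℝ)) := by ring
  rw [e, ← h2]
  simp only [cosecSum, Int.natAbs_natCast, Int.cast_natCast, Int.cast_one, mul_one]
  congr 1
  refine Finset.sum_congr rfl fun j _ => ?_
  ring
end

section
/- Let p and q be coprime nonzero integers with p ≢ q (mod 2). Then S(q, 1, p; −1) + S(p, 1, q; −1) = −p/(6q) − q/(6p) − 1/(6pq). -/
open Real

open Polynomial in
/-- Third-order expansion of `X ^ n` around `1`. -/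
lemma aux_pow_expand (n : ℕ) : ∃ R : ℂ[X], (X : ℂ[X]) ^ n =
    1 + C (n : ℂ) * (X - 1) + C ((n : ℂ) * (n - 1) / 2) * (X - 1) ^ 2
      + C ((n : ℂ) * (n - 1) * (n - 2) / 6) * (X - 1) ^ 3 + (X - 1) ^ 4 * R := by
  induction n with
  | zero => exact ⟨0, by simp⟩
  | succ n ih =>
    obtain ⟨R, hR⟩ := ih
    refine ⟨R * X + C ((n : ℂ) * (n - 1) * (n - 2) / 6), ?_⟩
    have h1 : C ((n + 1 : ℕ) : ℂ) = C (n : ℂ) + 1 := by simp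
    have h2 : C (((n + 1 : ℕ) : ℂ) * ((n + 1 : ℕ) - 1) / 2)
        = C (n : ℂ) + C ((n : ℂ) * (n - 1) / 2) := by
      rw [← C_add]; congr 1; push_cast; ring
    have h3 : C (((n + 1 : ℕ) : ℂ) * ((n + 1 : ℕ) - 1) * ((n + 1 : ℕ) - 2) / 6)
        = C ((n : ℂ) * (n - 1) / 2) + C ((n : ℂ) * (n - 1) * (n - 2) / 6) := by
      rw [← C_add]; congr 1; push_cast; ring
    rw [pow_succ, h1, h2, h3]
    linear_combination X * hR

open Polynomial in
/-- Second-order expansion of `1 + X + ... + X ^ (n-1)` around `1`. -/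
lemma aux_geom_expand (n : ℕ) : ∃ R : ℂ[X], (∑ i ∈ Finset.range n, (X : ℂ[X]) ^ i) =
    C (n : ℂ) + C ((n : ℂ) * (n - 1) / 2) * (X - 1)
      + C ((n : ℂ) * (n - 1) * (n - 2) / 6) * (X - 1) ^ 2 + (X - 1) ^ 3 * R := by
  obtain ⟨R, hR⟩ := aux_pow_expand n
  refine ⟨R, ?_⟩
  have hx : (X - 1 : ℂ[X]) ≠ 0 := by
    simpa using X_sub_C_ne_zero (1 : ℂ)
  apply mul_right_cancel₀ hx
  rw [geom_sum_mul, hR]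
  ring

open Polynomial in
lemma aux_lagrange (s : Finset ℂ) (hs : 1 ≤ s.card) (a b c : ℂ) (F H : ℂ[X])
    (hF : F.natDegree < s.card + 2)
    (h : F = (C a + C b * (X - 1) + C c * (X - 1) ^ 2) * Lagrange.nodal s id
      + (X - 1) ^ 3 * H) :
    ∑ z ∈ s, H.eval z / (derivative (Lagrange.nodal s id)).eval z = -c := by
  classical
  set D := Lagrange.nodal s (id : ℂ → ℂ) with hD
  have hx1 : (X - 1 : ℂ[X]) = X - C 1 := by simp
  have hDm : D.Monic := Lagrange.nodal_monic
  have hDd : D.natDegree = s.card := Lagrange.natDegree_nodal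
  set Q : ℂ[X] := C a + C b * (X - 1) + C c * (X - 1) ^ 2 with hQ
  have hQd : Q.natDegree ≤ 2 := by
    rw [hQ]; compute_degree
  have hQc : Q.coeff 2 = c := by
    rw [hQ]; compute_degree!
  have hx3m : ((X - 1 : ℂ[X]) ^ 3).Monic := by
    rw [hx1]; exact (monic_X_sub_C 1).pow 3
  have hx3d : ((X - 1 : ℂ[X]) ^ 3).natDegree = 3 := by
    rw [hx1]; rw [natDegree_pow, natDegree_X_sub_C]
  have hQD : (Q * D).natDegree ≤ s.card + 2 := by
    refine natDegree_mul_le.trans ?_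
    omega
  have hxH : (X - 1) ^ 3 * H = F - Q * D := by rw [h]; ring
  have hd : ((X - 1) ^ 3 * H).natDegree ≤ s.card + 2 := by
    rw [hxH]
    exact (natDegree_sub_le _ _).trans (max_le hF.le hQD)
  have hHd : H.natDegree ≤ s.card - 1 := by
    by_cases h0 : H = 0
    · simp [h0]
    · rw [hx3m.natDegree_mul' h0, hx3d] at hd
      omega
  have hc1 : ((X - 1) ^ 3 * H).coeff (s.card + 2) = H.coeff (s.card - 1) := by
    have e : s.card + 2 = 3 + (s.card - 1) := by omega
    rw [e, coeff_mul_add_eq_of_natDegree_le hx3d.le hHd]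
    have : ((X - 1 : ℂ[X]) ^ 3).coeff 3 = 1 := by
      have := hx3m.coeff_natDegree
      rwa [hx3d] at this
    rw [this, one_mul]
  have hc2 : (Q * D).coeff (s.card + 2) = c := by
    rw [add_comm, coeff_mul_add_eq_of_natDegree_le hQd hDd.le, hQc]
    have := hDm.coeff_natDegree
    rw [hDd] at this
    rw [this, mul_one]
  have hc3 : H.coeff (s.card - 1) = -c := by
    rw [← hc1, hxH, coeff_sub, hc2, coeff_eq_zero_of_natDegree_lt hF, zero_sub]
  have hHdeg : H.degree < s.card := by
    refine (degree_le_natDegree).trans_lt ?_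
    exact_mod_cast (by omega : H.natDegree < s.card)
  have key := Lagrange.coeff_eq_sum (s := s) (v := (id : ℂ → ℂ)) (Function.injective_id.injOn) hHdeg
  rw [← hc3, key]
  refine Finset.sum_congr rfl fun z hz => ?_
  have e := Lagrange.eval_nodal_derivative_eval_node_eq (s := s) (v := (id : ℂ → ℂ)) hz
  rw [Lagrange.eval_nodal] at e
  simp only [id_eq] at e ⊢
  rw [hD, e]

open Polynomial in
lemma aux_nodal (n : ℕ) (hn : 0 < n) :
    Lagrange.nodal ((nthRootsFinset n (1 : ℂ)).erase 1) (id : ℂ → ℂ)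
      = ∑ i ∈ Finset.range n, (X : ℂ[X]) ^ i := by
  have hx : (X - 1 : ℂ[X]) ≠ 0 := by
    simpa using X_sub_C_ne_zero (1 : ℂ)
  apply mul_right_cancel₀ hx
  rw [geom_sum_mul, X_pow_sub_one_eq_prod hn (Complex.isPrimitiveRoot_exp n hn.ne'),
    Lagrange.nodal_eq]
  have h1 : (1 : ℂ) ∈ nthRootsFinset n (1 : ℂ) := by
    rw [mem_nthRootsFinset hn]; simp
  rw [← Finset.prod_erase_mul _ _ h1]
  simp

open Polynomial in
/-- Derivative of the geometric sum at a nontrivial root of unity. -/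
lemma aux_deriv (n : ℕ) (z : ℂ) (hz : z ^ n = 1) (hz1 : z ≠ 1) :
    (∑ i ∈ Finset.range n, (X : ℂ[X]) ^ i).eval z = 0 ∧
    (derivative (∑ i ∈ Finset.range n, (X : ℂ[X]) ^ i)).eval z * (z - 1) * z = n := by
  have hs : z - 1 ≠ 0 := sub_ne_zero.2 hz1
  have h := geom_sum_mul (X : ℂ[X]) n
  have h0 : (∑ i ∈ Finset.range n, (X : ℂ[X]) ^ i).eval z = 0 := by
    have := congrArg (eval z) h
    simp only [eval_mul, eval_sub, eval_X, eval_one, eval_pow, hz, sub_self] at this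
    exact (mul_eq_zero.1 this).resolve_right hs
  refine ⟨h0, ?_⟩
  have h2 := congrArg (fun P => eval z (derivative P)) h
  simp only [derivative_mul, derivative_sub, derivative_X, derivative_one, derivative_X_pow,
    eval_add, eval_mul, h0, eval_sub, eval_X, eval_one, eval_pow, sub_zero, eval_natCast,
    zero_mul, add_zero, mul_one, eval_C, map_natCast] at h2
  rw [h2]
  rcases n with _ | n
  · simp
  · rw [Nat.add_sub_cancel, mul_assoc, ← pow_succ, hz, mul_one]

open Polynomial in
lemma aux_root_sum (p q k : ℕ) (hp : 0 < p) (hq : 0 < q) (hpq : p.Coprime q)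
    (hk : p + q = 2 * k + 1) :
    (∑ z ∈ (nthRootsFinset p (1 : ℂ)).erase 1, z ^ (k + 1) / ((z ^ q - 1) * (z - 1))) / p
    + (∑ z ∈ (nthRootsFinset q (1 : ℂ)).erase 1, z ^ (k + 1) / ((z ^ p - 1) * (z - 1))) / q
    = ((p : ℂ) ^ 2 + q ^ 2 + 1) / (24 * p * q) := by
  classical
  set A := (nthRootsFinset p (1 : ℂ)).erase 1 with hA
  set B := (nthRootsFinset q (1 : ℂ)).erase 1 with hB
  have memA : ∀ z, z ∈ A ↔ z ≠ 1 ∧ z ^ p = 1 := by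
    intro z; rw [hA, Finset.mem_erase, mem_nthRootsFinset hp]
  have memB : ∀ z, z ∈ B ↔ z ≠ 1 ∧ z ^ q = 1 := by
    intro z; rw [hB, Finset.mem_erase, mem_nthRootsFinset hq]
  have hcop : ∀ z : ℂ, z ^ p = 1 → z ^ q = 1 → z = 1 := by
    intro z h1 h2
    have := pow_gcd_eq_one.2 ⟨h1, h2⟩
    rwa [hpq.gcd_eq_one, pow_one] at this
  have hdisj : Disjoint A B := by
    rw [Finset.disjoint_left]
    intro z h1 h2
    exact ((memA z).1 h1).1 (hcop z ((memA z).1 h1).2 ((memB z).1 h2).2)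
  have cardA : A.card = p - 1 := by
    rw [hA, Finset.card_erase_of_mem (by rw [mem_nthRootsFinset hp]; simp),
      (Complex.isPrimitiveRoot_exp p hp.ne').card_nthRootsFinset]
  have cardB : B.card = q - 1 := by
    rw [hB, Finset.card_erase_of_mem (by rw [mem_nthRootsFinset hq]; simp),
      (Complex.isPrimitiveRoot_exp q hq.ne').card_nthRootsFinset]
  have hcard : (A ∪ B).card = p + q - 2 := by
    rw [Finset.card_union_of_disjoint hdisj]; omega
  have hge : 3 ≤ p + q := by
    by_contra hlt
    omega
  set P : ℂ[X] := ∑ i ∈ Finset.range p, (X : ℂ[X]) ^ i with hP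
  set Q : ℂ[X] := ∑ i ∈ Finset.range q, (X : ℂ[X]) ^ i with hQ
  have hN : Lagrange.nodal (A ∪ B) (id : ℂ → ℂ) = P * Q := by
    rw [hP, hQ, ← aux_nodal p hp, ← aux_nodal q hq, Lagrange.nodal_eq, Lagrange.nodal_eq,
      Lagrange.nodal_eq, Finset.prod_union hdisj]
  obtain ⟨Rp, hRp⟩ := aux_geom_expand p
  obtain ⟨Rq, hRq⟩ := aux_geom_expand q
  obtain ⟨Rk, hRk⟩ := aux_pow_expand k
  rw [← hP] at hRp
  rw [← hQ] at hRq
  have hp0 : (p : ℂ) ≠ 0 := by exact_mod_cast hp.ne'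
  have hq0 : (q : ℂ) ≠ 0 := by exact_mod_cast hq.ne'
  have hkC : (k : ℂ) = (p + q - 1) / 2 := by
    have : (p : ℂ) + q = 2 * k + 1 := by exact_mod_cast hk
    rw [this]; ring
  have hexp : ∃ H : ℂ[X], X ^ k = (C (1 / (p * q : ℂ)) + C (1 / (2 * p * q : ℂ)) * (X - 1)
      + C (-((p : ℂ) ^ 2 + q ^ 2 + 1) / (24 * p * q)) * (X - 1) ^ 2) * (P * Q)
      + (X - 1) ^ 3 * H := by
    have e0 : 1 / (p * q : ℂ) * (p * q) = 1 := by field_simp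
    have e1 : 1 / (p * q : ℂ) * (p * (q * (q - 1) / 2) + (p * (p - 1) / 2) * q)
        + 1 / (2 * p * q : ℂ) * (p * q) = k := by rw [hkC]; field_simp; ring
    have e2 : 1 / (p * q : ℂ) * (p * (q * (q - 1) * (q - 2) / 6)
        + (p * (p - 1) / 2) * (q * (q - 1) / 2) + (p * (p - 1) * (p - 2) / 6) * q)
        + 1 / (2 * p * q : ℂ) * (p * (q * (q - 1) / 2) + (p * (p - 1) / 2) * q)
        + -((p : ℂ) ^ 2 + q ^ 2 + 1) / (24 * p * q) * (p * q) = k * (k - 1) / 2 := by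
      rw [hkC]; field_simp; ring
    rw [hRp, hRq, hRk]
    generalize (k : ℂ) * (k - 1) * (k - 2) / 6 = k3 at *
    generalize (k : ℂ) * (k - 1) / 2 = k2 at *
    generalize (p : ℂ) * (p - 1) * (p - 2) / 6 = p2 at *
    generalize (p : ℂ) * (p - 1) / 2 = p1 at *
    generalize (q : ℂ) * (q - 1) * (q - 2) / 6 = q2 at *
    generalize (q : ℂ) * (q - 1) / 2 = q1 at *
    generalize -((p : ℂ) ^ 2 + q ^ 2 + 1) / (24 * p * q) = c at *
    generalize 1 / (2 * p * q : ℂ) = b at *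
    generalize 1 / (p * q : ℂ) = a at *
    generalize (p : ℂ) = p0 at *
    generalize (q : ℂ) = q0 at *
    generalize (k : ℂ) = k1 at *
    have f0 := congrArg (C : ℂ → ℂ[X]) e0
    have f1 := congrArg (C : ℂ → ℂ[X]) e1
    have f2 := congrArg (C : ℂ → ℂ[X]) e2
    simp only [C_mul, C_add, C_1] at f0 f1 f2
    generalize (X - 1 : ℂ[X]) = x
    refine ⟨C k3 + x * Rk
      - ((C a + C b * x + C c * x ^ 2) *
          (Rp * (C q0 + C q1 * x + C q2 * x ^ 2) + Rq * (C p0 + C p1 * x + C p2 * x ^ 2)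
            + x ^ 3 * Rp * Rq)
        + C a * (C p1 * C q2 + C p2 * C q1 + x * C p2 * C q2)
        + C b * (C p0 * C q2 + C p1 * C q1 + C p2 * C q0 + x * (C p1 * C q2 + C p2 * C q1)
            + x ^ 2 * C p2 * C q2)
        + C c * (C p0 * C q1 + C p1 * C q0 + x * (C p0 * C q2 + C p1 * C q1 + C p2 * C q0)
          + x ^ 2 * (C p1 * C q2 + C p2 * C q1) + x ^ 3 * C p2 * C q2)), ?_⟩
    linear_combination -f0 - x * f1 - x ^ 2 * f2
  obtain ⟨H, hH⟩ := hexp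
  rw [← hN] at hH
  have key := aux_lagrange (A ∪ B) (by omega) _ _ _ _ H
    (by rw [natDegree_X_pow, hcard]; omega) hH
  rw [hN, Finset.sum_union hdisj] at key
  have hHe : ∀ z : ℂ, (P * Q).eval z = 0 → z ^ k = (z - 1) ^ 3 * H.eval z := by
    intro z hz
    have := congrArg (eval z) hH
    rw [hN, eval_add, eval_mul, hz] at this
    simpa using this
  have hPz : ∀ z : ℂ, P.eval z * (z - 1) = z ^ p - 1 := by
    intro z
    have := congrArg (eval z) (geom_sum_mul (X : ℂ[X]) p)
    rw [← hP] at this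
    simpa using this
  have hQz : ∀ z : ℂ, Q.eval z * (z - 1) = z ^ q - 1 := by
    intro z
    have := congrArg (eval z) (geom_sum_mul (X : ℂ[X]) q)
    rw [← hQ] at this
    simpa using this
  have term : ∀ (n m : ℕ) (U V h d z : ℂ), n ≠ 0 → z ≠ 1 → z ^ m ≠ 1 →
      d * (z - 1) * z = n → V * (z - 1) = z ^ m - 1 → z ^ k = (z - 1) ^ 3 * h →
      z ^ (k + 1) / ((z ^ m - 1) * (z - 1)) / n = h / (d * V) := by
    intro n m U V h d z hn hz hzm hd hV hh
    have hz1 : z - 1 ≠ 0 := sub_ne_zero.2 hz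
    have hn0 : (n : ℂ) ≠ 0 := by exact_mod_cast hn
    have hzm1 : z ^ m - 1 ≠ 0 := sub_ne_zero.2 hzm
    have hV0 : V ≠ 0 := by rintro rfl; apply hzm1; rw [← hV]; ring
    have hd0 : d ≠ 0 := by rintro rfl; apply hn0; rw [← hd]; ring
    have hz0 : z ≠ 0 := by rintro rfl; apply hn0; rw [← hd]; ring
    rw [pow_succ, hh, ← hV, ← hd]
    field_simp
  have sA : (∑ z ∈ A, z ^ (k + 1) / ((z ^ q - 1) * (z - 1))) / p
      = ∑ z ∈ A, H.eval z / (derivative (P * Q)).eval z := by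
    rw [Finset.sum_div]
    refine Finset.sum_congr rfl fun z hz => ?_
    obtain ⟨hz1, hzp⟩ := (memA z).1 hz
    obtain ⟨h0, h1⟩ := aux_deriv p z hzp hz1
    rw [← hP] at h0 h1
    rw [derivative_mul, eval_add, eval_mul, eval_mul, h0, zero_mul, add_zero]
    exact term p q 0 _ _ _ z hp.ne' hz1 (fun h => hz1 (hcop z hzp h)) h1 (hQz z)
      (hHe z (by rw [eval_mul, h0, zero_mul]))
  have sB : (∑ z ∈ B, z ^ (k + 1) / ((z ^ p - 1) * (z - 1))) / q
      = ∑ z ∈ B, H.eval z / (derivative (P * Q)).eval z := by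
    rw [Finset.sum_div]
    refine Finset.sum_congr rfl fun z hz => ?_
    obtain ⟨hz1, hzq⟩ := (memB z).1 hz
    obtain ⟨h0, h1⟩ := aux_deriv q z hzq hz1
    rw [← hQ] at h0 h1
    rw [derivative_mul, eval_add, eval_mul, eval_mul, h0, mul_zero, zero_add, mul_comm (eval z P)]
    exact term q p 0 _ _ _ z hq.ne' hz1 (fun h => hz1 (hcop z h hzq)) h1 (hPz z)
      (hHe z (by rw [eval_mul, h0, mul_zero]))
  rw [sA, sB, key]
  ring

lemma aux_inv_sin (t : ℂ) : 1 / Complex.sin t =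
    2 * Complex.I * Complex.exp (t * Complex.I) / (Complex.exp (t * Complex.I) ^ 2 - 1) := by
  have h0 := Complex.exp_ne_zero (t * Complex.I)
  have h : Complex.sin t = (Complex.exp (t * Complex.I) ^ 2 - 1) /
      (2 * Complex.I * Complex.exp (t * Complex.I)) := by
    rw [Complex.sin, neg_mul, Complex.exp_neg]
    have hI := Complex.I_ne_zero
    field_simp
    rw [Complex.I_sq]
    ring
  rw [h, one_div_div]

open Polynomial in
lemma aux_cosec (p q k : ℕ) (hp : 0 < p) (hk : p + q = 2 * k + 1) :
    ((cosecSum q 1 p (-1) : ℝ) : ℂ) = -4 *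
    ((∑ z ∈ (nthRootsFinset p (1 : ℂ)).erase 1, z ^ (k + 1) / ((z ^ q - 1) * (z - 1))) / p) := by
  have hp0 : (p : ℂ) ≠ 0 := by exact_mod_cast hp.ne'
  have hprim := Complex.isPrimitiveRoot_exp p hp.ne'
  set w := Complex.exp (2 * π * Complex.I / p) with hw
  have hsum : (∑ z ∈ (nthRootsFinset p (1 : ℂ)).erase 1, z ^ (k + 1) / ((z ^ q - 1) * (z - 1)))
      = ∑ j ∈ Finset.Icc 1 (p - 1), (w ^ j) ^ (k + 1) / (((w ^ j) ^ q - 1) * (w ^ j - 1)) := by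
    symm
    refine Finset.sum_bij (fun j _ => w ^ j) ?_ ?_ ?_ ?_
    · intro j hj
      rw [Finset.mem_Icc] at hj
      rw [Finset.mem_erase, mem_nthRootsFinset hp]
      refine ⟨hprim.pow_ne_one_of_pos_of_lt (by omega) (by omega), ?_⟩
      rw [← pow_mul, mul_comm, pow_mul, hprim.pow_eq_one, one_pow]
    · intro i hi j hj h
      rw [Finset.mem_Icc] at hi hj
      exact hprim.pow_inj (by omega) (by omega) h
    · intro z hz
      rw [Finset.mem_erase, mem_nthRootsFinset hp] at hz
      have : NeZero p := ⟨hp.ne'⟩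
      obtain ⟨i, hi, h⟩ := hprim.eq_pow_of_pow_eq_one hz.2
      refine ⟨i, ?_, h⟩
      rw [Finset.mem_Icc]
      have : i ≠ 0 := by
        rintro rfl
        exact hz.1 (by rw [← h, pow_zero])
      omega
    · intros; rfl
  rw [hsum, cosecSum]
  push_cast
  rw [Int.natAbs_natCast, Finset.mul_sum, Finset.sum_div, Finset.mul_sum]
  refine Finset.sum_congr rfl fun j _ => ?_
  rw [aux_inv_sin, aux_inv_sin]
  set E := Complex.exp (j * π / p * Complex.I) with hE
  have e1 : Complex.exp ((j : ℂ) * 1 * π / p * Complex.I) = E := by rw [mul_one]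
  have e2 : Complex.exp ((j : ℂ) * q * π / p * Complex.I) = E ^ q := by
    rw [hE, ← Complex.exp_nat_mul]; congr 1; ring
  have e3 : w ^ j = E ^ 2 := by
    rw [hE, hw, ← Complex.exp_nat_mul, ← Complex.exp_nat_mul]; congr 1; push_cast; ring
  have e4 : (-1 : ℂ) ^ j = E ^ p := by
    rw [hE, ← Complex.exp_nat_mul, ← Complex.exp_pi_mul_I, ← Complex.exp_nat_mul]
    congr 1; field_simp
  have e5 : (E ^ 2) ^ (k + 1) = E ^ p * E ^ q * E := by
    rw [← pow_mul, ← pow_add, ← pow_succ]; congr 1; omega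
  rw [e1, e2, e3, e4, e5, ← pow_mul E q 2, ← pow_mul E 2 q, mul_comm q 2]
  have hI : Complex.I ^ 2 = -1 := Complex.I_sq
  generalize E ^ (2 * q) - 1 = u
  generalize E ^ 2 - 1 = v
  linear_combination (4 * E ^ p * E ^ q * E / (u * v) / p) * hI

lemma aux_nat (p q : ℕ) (hp : 0 < p) (hq : 0 < q) (hpq : p.Coprime q)
    (hodd : (p + q) % 2 = 1) :
    cosecSum q 1 p (-1) + cosecSum p 1 q (-1) =
      -(p : ℝ) / (6 * (q : ℝ)) - (q : ℝ) / (6 * (p : ℝ)) - 1 / (6 * (p : ℝ) * (q : ℝ)) := by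
  obtain ⟨k, hk⟩ : ∃ k, p + q = 2 * k + 1 := ⟨(p + q) / 2, by omega⟩
  have hp0 : (p : ℂ) ≠ 0 := by exact_mod_cast hp.ne'
  have hq0 : (q : ℂ) ≠ 0 := by exact_mod_cast hq.ne'
  have key := aux_root_sum p q k hp hq hpq hk
  apply Complex.ofReal_injective
  rw [Complex.ofReal_add, aux_cosec p q k hp hk, aux_cosec q p k hq (by omega), ← mul_add, key]
  push_cast
  field_simp
  ring

lemma aux_neg_left (q p : ℤ) : cosecSum (-q) 1 p (-1) = -cosecSum q 1 p (-1) := by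
  unfold cosecSum
  rw [← mul_neg, ← Finset.sum_neg_distrib]
  congr 1
  refine Finset.sum_congr rfl fun j _ => ?_
  have : (j : ℝ) * ((-q : ℤ) : ℝ) * π / p = -((j : ℝ) * q * π / p) := by push_cast; ring
  rw [this, Real.sin_neg]
  ring

lemma aux_neg_right (q p : ℤ) : cosecSum q 1 (-p) (-1) = -cosecSum q 1 p (-1) := by
  unfold cosecSum
  rw [Int.natAbs_neg, ← neg_mul]
  congr 1
  · push_cast; ring
  refine Finset.sum_congr rfl fun j _ => ?_
  have h1 : (j : ℝ) * (q : ℝ) * π / ((-p : ℤ) : ℝ) = -((j : ℝ) * q * π / p) := by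
    push_cast; ring
  have h2 : (j : ℝ) * ((1 : ℤ) : ℝ) * π / ((-p : ℤ) : ℝ) = -((j : ℝ) * ((1 : ℤ) : ℝ) * π / p) := by
    push_cast; ring
  rw [h1, h2, Real.sin_neg, Real.sin_neg]
  ring

/-- Reciprocity for Dedekind cosecant sums: for coprime nonzero integers `p, q` of
opposite parity, `S(q,1,p;−1) + S(p,1,q;−1) = −p/(6q) − q/(6p) − 1/(6pq)`. -/
theorem stmt_17 (p q : ℤ) (hp : p ≠ 0) (hq : q ≠ 0) (hcop : Int.gcd p q = 1)
    (hpar : ¬ p ≡ q [ZMOD 2]) :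
    cosecSum q 1 p (-1) + cosecSum p 1 q (-1) =
      -(p : ℝ) / (6 * (q : ℝ)) - (q : ℝ) / (6 * (p : ℝ))
        - 1 / (6 * (p : ℝ) * (q : ℝ)) := by
  have h := aux_nat p.natAbs q.natAbs (by omega) (by omega) hcop
    (by unfold Int.ModEq at hpar; omega)
  obtain ⟨a, ha⟩ : ∃ a : ℕ, a = p.natAbs := ⟨_, rfl⟩
  obtain ⟨b, hb⟩ : ∃ b : ℕ, b = q.natAbs := ⟨_, rfl⟩
  rw [← ha, ← hb] at h
  rcases (by omega : p = a ∨ p = -a) with h1 | h1 <;>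
  rcases (by omega : q = b ∨ q = -b) with h2 | h2 <;>
  subst h1 <;> subst h2 <;>
  simp only [aux_neg_left, aux_neg_right, neg_neg, Int.cast_neg, Int.cast_natCast]
  · exact h
  · linear_combination -h
  · linear_combination -h
  · linear_combination h
end
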